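/- arXiv:2209.03595 — 4 statements merged into one kernel-verified Lean document; each statement's English description precedes it below -/
import Mathlib

section
/- Let n ≥ 1. There exists a constant c = c(n) > 0 such that for every integrable function v on ℝ^n supported in the cube Q = (-1/2,1/2)^n with ‖v‖_{L^1} = 1, one has ∫_Q M^loc v(x) dx ≥ c ∫_Q |v(x)| ln₊|v(x)| dx. -/
open MeasureTheory Real Set Metric ENNReal

noncomputable section

/-- `ℝ^n` with the Euclidean norm. -/
abbrev En (n : ℕ) := EuclideanSpace ℝ (Fin n)

/-- `ln₊ t = max (ln t) 0`. -/
def lnp (t : ℝ) : ℝ := max (Real.log t) 0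

/-- The unit cube `Q = (-1/2, 1/2)^n`. -/
def unitQ (n : ℕ) : Set (En n) := {x | ∀ i, -(1/2 : ℝ) < x i ∧ x i < 1/2}

/-- The dilate `φ_t(y) = t^{-n} φ(y/t)` convolved with `f` at `x`:
`(φ_t ∗ f)(x) = ∫ t^{-n} φ((x-y)/t) f(y) dy`. -/
def phiConv (n : ℕ) (φ f : En n → ℝ) (t : ℝ) (x : En n) : ℝ :=
  ∫ y, (t ^ n)⁻¹ * φ (t⁻¹ • (x - y)) * f y

/-- The maximal function `𝓜_φ f(x) = sup_{t>0} |(φ_t ∗ f)(x)|`. -/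
def Mphi (n : ℕ) (φ f : En n → ℝ) (x : En n) : ℝ :=
  ⨆ t : {t : ℝ // 0 < t}, |phiConv n φ f t.1 x|

/-- A smooth function supported in the closed unit ball with integral `1`. -/
def IsTestFun (n : ℕ) (φ : En n → ℝ) : Prop :=
  ContDiff ℝ (⊤ : ℕ∞) φ ∧ (∀ x, x ∉ Metric.closedBall (0 : En n) 1 → φ x = 0) ∧ (∫ x, φ x) = 1

/-- Membership in the Hardy space `H^1(ℝ^n)`: the maximal function `𝓜_φ f` is
integrable for every admissible `φ`. -/
def MemH1 (n : ℕ) (f : En n → ℝ) : Prop :=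
  ∀ φ : En n → ℝ, IsTestFun n φ → Integrable (Mphi n φ f)

/-- The cube `Q_k = k + Q` for `k ∈ ℤ^n`. -/
def Qk (n : ℕ) (k : Fin n → ℤ) : Set (En n) :=
  {x | ∀ i, (k i : ℝ) - 1/2 < x i ∧ x i < (k i : ℝ) + 1/2}

/-- The lattice point `k ∈ ℤ^n` viewed as a point of `ℝ^n`. -/
def zv (n : ℕ) (k : Fin n → ℤ) : En n :=
  (EuclideanSpace.equiv (Fin n) ℝ).symm (fun i => (k i : ℝ))

/-- `μ_k = ‖f_k‖_{L^1} = ∫_{Q_k} |f|`. -/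
def muk (n : ℕ) (f : En n → ℝ) (k : Fin n → ℤ) : ℝ := ∫ x in Qk n k, |f x|

/-- The local Hardy–Littlewood maximal function
`M^loc f(x) = sup_{0<r<1} r^{-n} ∫_{|y-x|<r} |f(y)| dy`. -/
def Mloc (n : ℕ) (f : En n → ℝ) (x : En n) : ℝ :=
  ⨆ r : Set.Ioo (0 : ℝ) 1, ((r : ℝ) ^ n)⁻¹ * ∫ y in Metric.ball x (r : ℝ), |f y|

/-- volume of the unit ball -/
def om (n : ℕ) : ℝ := (volume (ball (0 : En n) 1)).toReal

theorem om_pos (n : ℕ) : 0 < om n :=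
  ENNReal.toReal_pos (measure_ball_pos _ _ one_pos).ne' measure_ball_lt_top.ne

theorem om_eq (n : ℕ) : volume (ball (0 : En n) 1) = ENNReal.ofReal (om n) :=
  (ENNReal.ofReal_toReal measure_ball_lt_top.ne).symm

theorem vol_ball (n : ℕ) (hn : 1 ≤ n) (x : En n) (r : ℝ) (hr : 0 ≤ r) :
    volume (ball x r) = ENNReal.ofReal (r ^ n * om n) := by
  have : Nonempty (Fin n) := ⟨⟨0, hn⟩⟩
  rw [Measure.addHaar_ball volume x hr, om_eq, finrank_euclideanSpace_fin,
    ENNReal.ofReal_mul (by positivity)]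

theorem unitQ_open (n : ℕ) : IsOpen (unitQ n) := by
  have : unitQ n = ⋂ i : Fin n, {x : En n | -(1/2 : ℝ) < x i ∧ x i < 1/2} := by
    ext x; simp [unitQ]
  rw [this]
  refine isOpen_iInter_of_finite fun i => ?_
  have hc : Continuous fun x : En n => x i := by fun_prop
  exact (isOpen_lt continuous_const hc).inter (isOpen_lt hc continuous_const)

/-- geometric constant -/
def kap (n : ℕ) : ℝ := (1 / (2 * √n)) ^ n * om n

theorem kap_pos (n : ℕ) (hn : 1 ≤ n) : 0 < kap n := by
  have := om_pos n
  have : (0:ℝ) < n := by exact_mod_cast hn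
  unfold kap; positivity

theorem vol_inter (n : ℕ) (hn : 1 ≤ n) (x : En n) (hx : x ∈ unitQ n) (r : ℝ) (hr : 0 < r)
    (hr1 : r ≤ 1) : ENNReal.ofReal (kap n * r ^ n) ≤ volume (ball x r ∩ unitQ n) := by
  have hn' : (1:ℝ) ≤ n := by exact_mod_cast hn
  have hs : 1 ≤ √(n:ℝ) := by rw [Real.one_le_sqrt]; exact hn'
  have hs0 : 0 < √(n:ℝ) := by linarith
  set s := r / √(n:ℝ) with hsdef
  have hs_pos : 0 < s := by positivity
  have hsr : s ≤ r := div_le_self hr.le hs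
  have hsn : s * √(n:ℝ) = r := by rw [hsdef]; field_simp
  have hnx : ‖x‖ ≤ √(n:ℝ) / 2 := by
    rw [EuclideanSpace.norm_eq]
    rw [Real.sqrt_le_left (by positivity)]
    have : ∑ i : Fin n, ‖x i‖ ^ 2 ≤ ∑ i : Fin n, (1/4 : ℝ) := by
      refine Finset.sum_le_sum fun i _ => ?_
      have := hx i
      rw [Real.norm_eq_abs, sq_abs]
      nlinarith
    refine this.trans ?_
    rw [div_pow, Real.sq_sqrt (by linarith)]
    simp
    linarith
  have hsub : ball ((1 - s) • x) (s / 2) ⊆ ball x r ∩ unitQ n := by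
    intro y hy
    rw [mem_ball] at hy
    constructor
    · rw [mem_ball]
      have h1 : dist ((1 - s) • x) x ≤ r / 2 := by
        rw [dist_eq_norm, show (1 - s) • x - x = -(s • x) by module, norm_neg, norm_smul,
          Real.norm_of_nonneg hs_pos.le]
        nlinarith
      have := dist_triangle y ((1 - s) • x) x
      linarith
    · intro i
      have h2 : |y i - (1 - s) * x i| < s / 2 := by
        rw [dist_eq_norm] at hy
        refine lt_of_le_of_lt ?_ hy
        have := PiLp.norm_apply_le (y - (1 - s) • x) i
        simpa using this
      rw [abs_lt] at h2
      have := hx i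
      constructor <;> nlinarith
  refine le_trans ?_ (measure_mono hsub)
  rw [vol_ball n hn _ _ (by positivity)]
  apply le_of_eq
  congr 1
  rw [kap, hsdef]
  rw [show r / √(n:ℝ) / 2 = (1 / (2 * √n)) * r by field_simp, mul_pow]
  ring

theorem leb (n : ℕ) (hn : 1 ≤ n) (v : En n → ℝ) (hv : Integrable v) :
    ∀ᵐ x, Filter.Tendsto (fun r : ℝ => (r ^ n)⁻¹ * ∫ y in ball x r, |v y|) (nhdsWithin 0 (Ioi 0))
      (nhds (om n * |v x|)) := by
  have : Nonempty (Fin n) := ⟨⟨0, hn⟩⟩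
  filter_upwards [(Besicovitch.vitaliFamily (volume : Measure (En n))).ae_tendsto_average
    (hv.abs.locallyIntegrable)] with x hx
  have h := (hx.comp (Besicovitch.tendsto_filterAt volume x)).const_mul (om n)
  refine h.congr' ?_
  filter_upwards [self_mem_nhdsWithin] with r hr
  have hr : 0 < r := hr
  have hb : (ball x r : Set (En n)) =ᵐ[volume] closedBall x r := by
    refine ae_eq_of_subset_of_measure_ge ball_subset_closedBall
      (Measure.addHaar_closedBall_eq_addHaar_ball volume x r).le
      measurableSet_ball.nullMeasurableSet measure_closedBall_lt_top.ne
  rw [setIntegral_congr_set hb]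
  simp only [Function.comp_apply]
  rw [setAverage_eq, Measure.real, Measure.addHaar_closedBall_eq_addHaar_ball,
    vol_ball n hn _ _ hr.le, ENNReal.toReal_ofReal (by have := om_pos n; positivity), smul_eq_mul]
  have := (om_pos n).ne'
  field_simp

/-- boundedness predicate -/
def Bd (n : ℕ) (v : En n → ℝ) (x : En n) : Prop :=
  BddAbove (range fun r : Set.Ioo (0 : ℝ) 1 =>
    ((r : ℝ) ^ n)⁻¹ * ∫ y in Metric.ball x (r : ℝ), |v y|)

theorem A_le (n : ℕ) (v : En n → ℝ) (hv : Integrable v) (h1 : (∫ x, |v x|) = 1) (s : Set (En n)) :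
    ∫ y in s, |v y| ≤ 1 := by
  rw [← h1]
  exact setIntegral_le_integral hv.abs (Filter.Eventually.of_forall fun x => abs_nonneg _)

theorem bd_of_tendsto (n : ℕ) (v : En n → ℝ) (hv : Integrable v)
    (h1 : (∫ x, |v x|) = 1) (x : En n) (L : ℝ)
    (h : Filter.Tendsto (fun r : ℝ => (r ^ n)⁻¹ * ∫ y in ball x r, |v y|) (nhdsWithin 0 (Ioi 0))
      (nhds L)) : Bd n v x := by
  have := h.eventually (gt_mem_nhds (lt_add_one L))
  obtain ⟨ε, hε, hε'⟩ := mem_nhdsGT_iff_exists_Ioo_subset.1 this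
  have hε : 0 < ε := hε
  refine ⟨max (L + 1) ((ε ^ n)⁻¹), ?_⟩
  rintro _ ⟨⟨r, hr0, hr1⟩, rfl⟩
  rcases lt_or_ge r ε with hr | hr
  · exact le_max_of_le_left (le_of_lt (hε' ⟨hr0, hr⟩))
  · apply le_max_of_le_right
    calc (r ^ n)⁻¹ * ∫ y in ball x r, |v y| ≤ (r ^ n)⁻¹ * 1 := by
          gcongr
          exact A_le n v hv h1 _
      _ ≤ (ε ^ n)⁻¹ := by rw [mul_one]; gcongr

theorem le_Mloc (n : ℕ) (v : En n → ℝ) (x : En n) (hb : Bd n v x) (r : ℝ) (h0 : 0 < r)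
    (h1 : r < 1) : (r ^ n)⁻¹ * ∫ y in ball x r, |v y| ≤ Mloc n v x :=
  le_ciSup hb (⟨r, h0, h1⟩ : Set.Ioo (0:ℝ) 1)

theorem v_le_Mloc (n : ℕ) (v : En n → ℝ) (x : En n) (hb : Bd n v x) (L : ℝ)
    (h : Filter.Tendsto (fun r : ℝ => (r ^ n)⁻¹ * ∫ y in ball x r, |v y|) (nhdsWithin 0 (Ioi 0))
      (nhds L)) : L ≤ Mloc n v x := by
  refine le_of_tendsto h ?_
  filter_upwards [Ioo_mem_nhdsGT one_pos] with r hr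
  exact le_Mloc n v x hb r hr.1 hr.2

theorem weak (n : ℕ) (hn : 1 ≤ n) (v : En n → ℝ) (hv : Integrable v) (h1 : (∫ x, |v x|) = 1)
    (l : ℝ) (hl : 2 ^ n < l) :
    ∃ G : Set (En n), MeasurableSet G ∧ (∀ y ∈ G, Bd n v y → l ≤ 2 ^ n * Mloc n v y) ∧
      ∫⁻ x in {x | x ∈ unitQ n ∧ ∃ r : ℝ, 0 < r ∧ l * r ^ n ≤ ∫ y in ball x r, |v y|},
        ENNReal.ofReal |v x| ≤ ENNReal.ofReal (5 ^ n / kap n) * (ENNReal.ofReal l *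
          volume (G ∩ unitQ n)) := by
  have hl0 : 0 < l := lt_trans (by positivity) hl
  have hk := kap_pos n hn
  set E := {x | x ∈ unitQ n ∧ ∃ r : ℝ, 0 < r ∧ l * r ^ n ≤ ∫ y in ball x r, |v y|} with hE
  have hsm : ∀ x : En n, ∀ r : ℝ, 0 < r → l * r ^ n ≤ ∫ y in ball x r, |v y| → r < 1 / 2 := by
    intro x r hr h
    by_contra! hc
    have h2 := h.trans (A_le n v hv h1 _)
    have h3 : (1/2 : ℝ) ^ n ≤ r ^ n := by gcongr
    have h4 : (2:ℝ) ^ n * (1/2) ^ n = 1 := by rw [← mul_pow]; norm_num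
    have h5 : (0:ℝ) < (1/2) ^ n := by positivity
    nlinarith
  have hch : ∀ x ∈ E, ∃ r : ℝ, 0 < r ∧ l * r ^ n ≤ (∫ y in ball x r, |v y|) ∧
      (∫ y in ball x (5 * r), |v y|) ≤ l * (5 * r) ^ n := by
    rintro x ⟨-, r0, hr0, h0⟩
    set S := {r : ℝ | 0 < r ∧ l * r ^ n ≤ ∫ y in ball x r, |v y|} with hS
    have hbd : BddAbove S := ⟨1/2, fun r hr => (hsm x r hr.1 hr.2).le⟩
    have hmem : r0 ∈ S := ⟨hr0, h0⟩
    have hpos : 0 < sSup S := hr0.trans_le (le_csSup hbd hmem)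
    obtain ⟨r, hrS, hr⟩ := exists_lt_of_lt_csSup ⟨r0, hmem⟩ (half_lt_self hpos)
    refine ⟨r, hrS.1, hrS.2, ?_⟩
    by_contra! hc
    have : 5 * r ∈ S := ⟨by linarith [hrS.1], hc.le⟩
    have := le_csSup hbd this
    linarith [hrS.1]
  choose! ρ hρ0 hρ1 hρ2 using hch
  obtain ⟨u, hut, hud, huc⟩ := Vitali.exists_disjoint_subfamily_covering_enlargement_ball E
    (fun x : En n => x) ρ (1/2) (fun x hx => (hsm x _ (hρ0 x hx) (hρ1 x hx)).le) 5 (by norm_num)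
  have hcount : u.Countable := hud.countable_of_isOpen (fun i _ => isOpen_ball)
    (fun i hi => ⟨i, mem_ball_self (hρ0 i (hut hi))⟩)
  refine ⟨⋃ x ∈ u, ball x (ρ x), MeasurableSet.biUnion hcount fun _ _ => measurableSet_ball, ?_, ?_⟩
  · intro y hy hb
    obtain ⟨x, hxu, hyx⟩ := mem_iUnion₂.1 hy
    have hp := hρ0 x (hut hxu)
    have hlt := hsm x _ hp (hρ1 x (hut hxu))
    have h3 := le_Mloc n v y hb (2 * ρ x) (by linarith) (by linarith)
    have h4 : ∫ z in ball x (ρ x), |v z| ≤ ∫ z in ball y (2 * ρ x), |v z| := by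
      refine setIntegral_mono_set hv.abs.integrableOn
        (Filter.Eventually.of_forall fun x => abs_nonneg _) (LE.le.eventuallyLE ?_)
      apply ball_subset_ball'
      rw [mem_ball, dist_comm] at hyx
      linarith
    have h5 := (hρ1 x (hut hxu)).trans h4
    rw [inv_mul_le_iff₀ (by positivity), mul_pow] at h3
    have h6 : 0 < ρ x ^ n := by positivity
    have h7 := h5.trans h3
    have : l * ρ x ^ n ≤ (2 ^ n * Mloc n v y) * ρ x ^ n := by linarith
    exact le_of_mul_le_mul_right this h6
  · have := hcount.to_subtype
    have hcov : E ⊆ ⋃ x : u, ball (x : En n) (5 * ρ x) := by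
      intro x hx
      obtain ⟨b, hb, hsub⟩ := huc x hx
      exact mem_iUnion.2 ⟨⟨b, hb⟩, hsub (mem_ball_self (hρ0 x hx))⟩
    have hvol : volume ((⋃ x ∈ u, ball x (ρ x)) ∩ unitQ n) =
        ∑' x : u, volume (ball (x : En n) (ρ x) ∩ unitQ n) := by
      rw [biUnion_eq_iUnion, iUnion_inter]
      refine measure_iUnion ?_ fun i => measurableSet_ball.inter (unitQ_open n).measurableSet
      intro i j hij
      exact (hud i.2 j.2 (fun h => hij (Subtype.ext h))).mono inter_subset_left inter_subset_left
    rw [hvol]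
    calc ∫⁻ x in E, ENNReal.ofReal |v x|
        ≤ ∫⁻ x in ⋃ x : u, ball (x : En n) (5 * ρ x), ENNReal.ofReal |v x| :=
          lintegral_mono_set hcov
      _ ≤ ∑' x : u, ∫⁻ x in ball (x : En n) (5 * ρ x), ENNReal.ofReal |v x| :=
          lintegral_iUnion_le _ _
      _ ≤ ∑' x : u, ENNReal.ofReal (5 ^ n / kap n) * (ENNReal.ofReal l *
            volume (ball (x : En n) (ρ x) ∩ unitQ n)) := by
          refine ENNReal.tsum_le_tsum fun x => ?_
          have hx := hut x.2
          have hp := hρ0 _ hx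
          have hlt := hsm _ _ hp (hρ1 _ hx)
          rw [← ofReal_integral_eq_lintegral_ofReal hv.abs.integrableOn
            (Filter.Eventually.of_forall fun x => abs_nonneg _)]
          calc ENNReal.ofReal (∫ y in ball (x : En n) (5 * ρ x), |v y|)
              ≤ ENNReal.ofReal ((5 ^ n / kap n) * (l * (kap n * ρ x ^ n))) := by
                apply ENNReal.ofReal_le_ofReal
                refine (hρ2 _ hx).trans (le_of_eq ?_)
                rw [mul_pow]; field_simp
            _ ≤ _ := by
                rw [ENNReal.ofReal_mul (by positivity), ENNReal.ofReal_mul hl0.le]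
                gcongr
                exact vol_inter n hn _ hx.1 _ hp (by linarith)
      _ = _ := by rw [ENNReal.tsum_mul_left, ENNReal.tsum_mul_left]

theorem lev_sum (n : ℕ) (P : ℕ → Prop) [DecidablePred P] (a : ℝ) (ha : 0 ≤ a)
    (h : ∀ k, P k → (2:ℝ) ^ (n + 1 + k) ≤ a) (K : ℕ) :
    ∑ k ∈ Finset.range K, (if P k then (2:ℝ) ^ (n + 1 + k) else 0) ≤ 2 * a := by
  induction K with
  | zero => simpa using ha
  | succ K ih =>
    by_cases hK : P K
    · have h2 : ∀ m : ℕ, ∑ k ∈ Finset.range m, (if P k then (2:ℝ) ^ (n + 1 + k) else 0) ≤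
          2 ^ (n + 1 + m) := by
        intro m
        induction m with
        | zero => simp
        | succ m ihm =>
          rw [Finset.sum_range_succ, ← add_assoc, pow_succ]
          have : (if P m then (2:ℝ) ^ (n + 1 + m) else 0) ≤ 2 ^ (n + 1 + m) := by
            split_ifs
            · exact le_rfl
            · positivity
          linarith
      have h3 := h2 (K + 1)
      have h4 := h K hK
      rw [← add_assoc, pow_succ] at h3
      linarith
    · rw [Finset.sum_range_succ, if_neg hK, add_zero]; exact ih

/-- additive constant -/
def CC (n : ℕ) : ℝ := |Real.log (2 ^ (n + 1) / om n)|

theorem lnp_le (n : ℕ) (t : ℝ) (ht : 0 ≤ t) (S : ℕ → Set (En n)) (x : En n)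
    (hS : ∀ k, 2 ^ (n + 1 + k) < om n * t → x ∈ S k) :
    ENNReal.ofReal (lnp t) ≤ ENNReal.ofReal (CC n) + ∑' k, (S k).indicator 1 x := by
  have ho := om_pos n
  have hC : 0 ≤ CC n := abs_nonneg _
  have hex : ∃ k : ℕ, om n * t ≤ 2 ^ (n + 1 + k) := by
    obtain ⟨k, hk⟩ := pow_unbounded_of_one_lt (om n * t) (one_lt_two : (1:ℝ) < 2)
    exact ⟨k, hk.le.trans (pow_le_pow_right₀ one_le_two (by omega))⟩
  classical
  set K := Nat.find hex
  have hK : om n * t ≤ 2 ^ (n + 1 + K) := Nat.find_spec hex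
  have hlt : ∀ k < K, x ∈ S k := fun k hk => hS k (not_le.1 (Nat.find_min hex hk))
  have h1 : lnp t ≤ CC n + K := by
    unfold lnp
    refine max_le ?_ (by positivity)
    rcases ht.eq_or_lt with h0 | h0
    · rw [← h0]; simp; positivity
    have : Real.log t ≤ Real.log (2 ^ (n + 1) / om n * 2 ^ K) := by
      apply Real.log_le_log h0
      rw [div_mul_eq_mul_div, le_div_iff₀ ho, ← pow_add]
      linarith
    rw [Real.log_mul (by positivity) (by positivity), Real.log_pow] at this
    have h2 : (K:ℝ) * Real.log 2 ≤ K * 1 := by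
      gcongr
      linarith [Real.log_two_lt_d9]
    have := le_abs_self (Real.log (2 ^ (n + 1) / om n))
    unfold CC
    linarith
  calc ENNReal.ofReal (lnp t) ≤ ENNReal.ofReal (CC n + K) := ENNReal.ofReal_le_ofReal h1
    _ = ENNReal.ofReal (CC n) + K := by
      rw [ENNReal.ofReal_add hC (by positivity), ENNReal.ofReal_natCast]
    _ ≤ _ := by
      gcongr
      calc (K : ℝ≥0∞) = ∑ k ∈ Finset.range K, (S k).indicator 1 x := by
            rw [Finset.sum_congr rfl fun k hk => indicator_of_mem (hlt k (Finset.mem_range.1 hk)) 1]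
            simp
        _ ≤ _ := ENNReal.sum_le_tsum _

theorem sum_G (n : ℕ) (v : En n → ℝ) (G : ℕ → Set (En n)) (hGm : ∀ k, MeasurableSet (G k))
    (hb : ∀ᵐ x, Bd n v x)
    (hG : ∀ k, ∀ y ∈ G k, Bd n v y → (2:ℝ) ^ (n + 1 + k) ≤ 2 ^ n * Mloc n v y) :
    ∑' k, ENNReal.ofReal (2 ^ (n + 1 + k)) * volume (G k ∩ unitQ n) ≤
      ENNReal.ofReal (2 * 2 ^ n) * ∫⁻ x in unitQ n, ENNReal.ofReal (Mloc n v x) := by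
  classical
  have h0 : ∀ x, 0 ≤ Mloc n v x := fun x => Real.iSup_nonneg fun r =>
    mul_nonneg (inv_nonneg.2 (pow_nonneg r.2.1.le _)) (integral_nonneg fun _ => abs_nonneg _)
  calc ∑' k, ENNReal.ofReal (2 ^ (n + 1 + k)) * volume (G k ∩ unitQ n)
      = ∑' k, ∫⁻ x in unitQ n, (G k).indicator (fun _ => ENNReal.ofReal (2 ^ (n + 1 + k))) x := by
        refine tsum_congr fun k => ?_
        rw [lintegral_indicator_const (hGm k), Measure.restrict_apply (hGm k)]
    _ = ∫⁻ x in unitQ n, ∑' k, (G k).indicator (fun _ => ENNReal.ofReal (2 ^ (n + 1 + k))) x := by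
        rw [lintegral_tsum]
        exact fun k => (measurable_const.indicator (hGm k)).aemeasurable
    _ ≤ ∫⁻ x in unitQ n, ENNReal.ofReal (2 * 2 ^ n) * ENNReal.ofReal (Mloc n v x) := by
        refine lintegral_mono_ae ?_
        filter_upwards [ae_restrict_of_ae hb] with x hx
        rw [ENNReal.tsum_eq_iSup_nat]
        refine iSup_le fun K => ?_
        have := lev_sum n (fun k => x ∈ G k) (2 ^ n * Mloc n v x)
          (mul_nonneg (by positivity) (h0 x)) (fun k hk => hG k x hk hx) K
        rw [← ENNReal.ofReal_mul (by positivity), mul_assoc]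
        refine le_trans (le_of_eq ?_) (ENNReal.ofReal_le_ofReal this)
        rw [ENNReal.ofReal_sum_of_nonneg]
        · refine Finset.sum_congr rfl fun k _ => ?_
          by_cases hk : x ∈ G k <;> simp [hk]
        · intro k _
          split_ifs <;> positivity
    _ = _ := lintegral_const_mul' _ _ ENNReal.ofReal_ne_top

/-- **Stein-type lower bound for the local maximal function.**
There is `c = c(n) > 0` such that for every integrable `v` supported in
`Q = (-1/2,1/2)^n` with `‖v‖_{L^1} = 1`, one has
`∫_Q M^loc v ≥ c ∫_Q |v| ln₊|v|`. -/
theorem Mloc_lower_bound (n : ℕ) (hn : 1 ≤ n) :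
    ∃ c : ℝ, 0 < c ∧ ∀ v : En n → ℝ, Integrable v →
      (∀ x, x ∉ unitQ n → v x = 0) → (∫ x, |v x|) = 1 →
      ENNReal.ofReal c * ∫⁻ x in unitQ n, ENNReal.ofReal (|v x| * lnp |v x|) ≤
        ∫⁻ x in unitQ n, ENNReal.ofReal (Mloc n v x) := by
  have ho := om_pos n
  have hk := kap_pos n hn
  have hC : 0 ≤ CC n := abs_nonneg _
  set T : ℝ := CC n / om n + 5 ^ n / kap n * (2 * 2 ^ n) with hT
  have hT0 : 0 < T := by positivity
  refine ⟨T⁻¹, by positivity, fun v hv _ h1 => ?_⟩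
  have hleb := leb n hn v hv
  have hb : ∀ᵐ x, Bd n v x := by
    filter_upwards [hleb] with x hx using bd_of_tendsto n v hv h1 x _ hx
  set I := ∫⁻ x in unitQ n, ENNReal.ofReal (Mloc n v x) with hI
  have hw : ∀ k : ℕ, (2:ℝ) ^ n < 2 ^ (n + 1 + k) := fun k =>
    pow_lt_pow_right₀ one_lt_two (by omega)
  choose G hGm hG hGE using fun k : ℕ => weak n hn v hv h1 (2 ^ (n + 1 + k)) (hw k)
  have hmeas : AEMeasurable (fun x => ENNReal.ofReal |v x|) (volume.restrict (unitQ n)) :=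
    hv.abs.aemeasurable.ennreal_ofReal.restrict
  set S : ℕ → Set (En n) := fun k => {x | 2 ^ (n + 1 + k) < om n * |v x|} with hS
  have hSm : ∀ k, NullMeasurableSet (S k) (volume.restrict (unitQ n)) := fun k =>
    nullMeasurableSet_lt aemeasurable_const (hv.abs.aemeasurable.restrict.const_mul _)
  have s4 : ENNReal.ofReal (om n) * ∫⁻ x in unitQ n, ENNReal.ofReal |v x| ≤ I := by
    rw [← lintegral_const_mul' _ _ ENNReal.ofReal_ne_top]
    refine lintegral_mono_ae ?_
    filter_upwards [ae_restrict_of_ae hb, ae_restrict_of_ae hleb] with x hx hx'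
    rw [← ENNReal.ofReal_mul ho.le]
    exact ENNReal.ofReal_le_ofReal (v_le_Mloc n v x hx _ hx')
  have s2 : ∀ k, ∫⁻ x in unitQ n, (S k).indicator (fun x => ENNReal.ofReal |v x|) x ≤
      ENNReal.ofReal (5 ^ n / kap n) * (ENNReal.ofReal (2 ^ (n + 1 + k)) *
          volume (G k ∩ unitQ n)) := by
    intro k
    refine le_trans ?_ (hGE k)
    rw [lintegral_indicator₀ (hSm k), Measure.restrict_restrict₀ (hSm k)]
    refine lintegral_mono' (Measure.restrict_mono_ae ?_) le_rfl
    filter_upwards [hleb] with x hx hxS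
    refine ⟨hxS.2, ?_⟩
    obtain ⟨r, hr, hr0⟩ := ((hx.eventually (lt_mem_nhds hxS.1)).and self_mem_nhdsWithin).exists
    have hr0 : 0 < r := hr0
    refine ⟨r, hr0, ?_⟩
    rw [inv_mul_eq_div, lt_div_iff₀ (by positivity)] at hr
    exact hr.le
  have s1 : ∫⁻ x in unitQ n, ENNReal.ofReal (|v x| * lnp |v x|) ≤
      ENNReal.ofReal (CC n) * (∫⁻ x in unitQ n, ENNReal.ofReal |v x|) +
      ∑' k, ∫⁻ x in unitQ n, (S k).indicator (fun x => ENNReal.ofReal |v x|) x := by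
    rw [← lintegral_tsum fun k => hmeas.indicator₀ (hSm k),
      ← lintegral_const_mul' _ _ ENNReal.ofReal_ne_top, ← lintegral_add_left' (hmeas.const_mul _)]
    refine lintegral_mono fun x => ?_
    rw [ENNReal.ofReal_mul (abs_nonneg _)]
    calc _ ≤ ENNReal.ofReal |v x| * (ENNReal.ofReal (CC n) + ∑' k, (S k).indicator 1 x) := by
          gcongr
          exact lnp_le n _ (abs_nonneg _) S x fun k hk => hk
      _ = _ := by
          rw [mul_add, mul_comm, ← ENNReal.tsum_mul_left]
          congr 1
          refine tsum_congr fun k => ?_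
          by_cases hx : x ∈ S k <;> simp [hx]
  have s3 := sum_G n v G hGm hb hG
  have key : ∫⁻ x in unitQ n, ENNReal.ofReal (|v x| * lnp |v x|) ≤ ENNReal.ofReal T * I := by
    refine s1.trans ?_
    rw [hT, ENNReal.ofReal_add (by positivity) (by positivity), add_mul]
    refine add_le_add ?_ ?_
    · calc _ = ENNReal.ofReal (CC n / om n) * (ENNReal.ofReal (om n) *
            ∫⁻ x in unitQ n, ENNReal.ofReal |v x|) := by
            rw [← mul_assoc, ← ENNReal.ofReal_mul (by positivity), div_mul_cancel₀ _ ho.ne']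
        _ ≤ _ := by gcongr
    · refine (ENNReal.tsum_le_tsum s2).trans ?_
      rw [ENNReal.tsum_mul_left, ENNReal.ofReal_mul (by positivity), mul_assoc]
      gcongr
  calc _ ≤ ENNReal.ofReal T⁻¹ * (ENNReal.ofReal T * I) := by gcongr
    _ = I := by
      rw [← mul_assoc, ← ENNReal.ofReal_mul (by positivity), inv_mul_cancel₀ hT0.ne']
      simp
end
end

section
/- Let n ≥ 1 and let f be an integrable function on ℝ^n satisfying ∑_{k ∈ ℤ^n} ∫_{Q_k} |f_k(x)| (1 + ln₊(|f_k(x)|/μ_k)) dx < ∞ (terms with μ_k = 0 interpreted as 0). Set h_k = f_k − (∫ f_k dx)·χ_{Q_k} and h = ∑_{k ∈ ℤ^n} h_k. Then for every smooth φ supported in the closed unit ball with ∫φ = 1 one has ∑_{k ∈ ℤ^n} ‖𝓜_φ h_k‖_{L^1} < ∞, and in particular h belongs to H^1(ℝ^n). -/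
open MeasureTheory Real Set Metric ENNReal

noncomputable section

lemma weakT (n : ℕ) (hn : 1 ≤ n) (v : En n → ℝ≥0∞) (hv : ∫⁻ y, v y ≠ ⊤) (l : ℝ≥0∞)
    (hl0 : l ≠ 0) (hl : l ≠ ⊤) :
    l * volume {x : En n | ∃ t : ℝ, 0 < t ∧
      l * volume (closedBall x t) < ∫⁻ y in closedBall x t, v y} ≤ 5 ^ n * ∫⁻ y, v y := by
  set E := {x : En n | ∃ t : ℝ, 0 < t ∧
      l * volume (closedBall x t) < ∫⁻ y in closedBall x t, v y} with hE
  have h1 : ∀ x : En n, x ∈ E → ∃ t : ℝ, 0 < t ∧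
      l * volume (closedBall x t) < ∫⁻ y in closedBall x t, v y := fun x hx => hx
  choose! r hr0 hr using h1
  set c := volume (ball (0 : En n) 1) with hc
  have hc0 : c ≠ 0 := (measure_ball_pos volume _ one_pos).ne'
  have hcT : c ≠ ⊤ := measure_ball_lt_top.ne
  have hvol : ∀ (x : En n) (t : ℝ), 0 ≤ t →
      volume (closedBall x t) = ENNReal.ofReal (t ^ n) * c := by
    intro x t ht
    rw [Measure.addHaar_closedBall _ _ ht]; simp [hc]
  have hR : ∀ x ∈ E, r x ≤ max 1 ((∫⁻ y, v y) / (l * c)).toReal := by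
    intro x hx
    by_cases h1 : r x ≤ 1
    · exact h1.trans (le_max_left _ _)
    push Not at h1
    refine le_trans ?_ (le_max_right _ _)
    have h2 := hr x hx
    rw [hvol _ _ (hr0 x hx).le] at h2
    have h3 : ENNReal.ofReal (r x) * (l * c) ≤ ∫⁻ y, v y := by
      calc ENNReal.ofReal (r x) * (l * c) ≤ ENNReal.ofReal (r x ^ n) * (l * c) := by
            gcongr
            exact le_self_pow₀ h1.le (by omega)
        _ = l * (ENNReal.ofReal (r x ^ n) * c) := by ring
        _ ≤ _ := h2.le.trans (setLIntegral_le_lintegral _ _)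
    have h4 : ENNReal.ofReal (r x) ≤ (∫⁻ y, v y) / (l * c) := by
      rw [ENNReal.le_div_iff_mul_le (Or.inl (mul_ne_zero hl0 hc0))
        (Or.inl (ENNReal.mul_ne_top hl hcT))]
      exact h3
    exact (ENNReal.ofReal_le_iff_le_toReal
      (ENNReal.div_ne_top hv (mul_ne_zero hl0 hc0))).1 h4
  obtain ⟨u, huE, hud, hu⟩ := Vitali.exists_disjoint_subfamily_covering_enlargement_closedBall
    E id r _ hR 5 (by norm_num)
  have huc : u.Countable := by
    refine hud.countable_of_nonempty_interior ?_
    intro x hx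
    refine ⟨x, ?_⟩
    exact ball_subset_interior_closedBall (mem_ball_self (hr0 x (huE hx)))
  have hcov : E ⊆ ⋃ b ∈ u, closedBall b (5 * r b) := by
    intro x hx
    obtain ⟨b, hb, hb2⟩ := hu x hx
    refine mem_iUnion₂.2 ⟨b, hb, hb2 ?_⟩
    exact mem_closedBall_self (hr0 x hx).le
  have : Countable u := huc.to_subtype
  calc l * volume E ≤ l * ∑' b : u, volume (closedBall (b : En n) (5 * r b)) := by
        gcongr
        refine (measure_mono hcov).trans ?_
        exact measure_biUnion_le _ huc _
    _ = ∑' b : u, 5 ^ n * (l * volume (closedBall (b : En n) (r b))) := by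
        rw [← ENNReal.tsum_mul_left]
        congr 1; ext b
        have hb := (hr0 b (huE b.2)).le
        rw [hvol _ _ hb, hvol _ _ (by positivity), mul_pow, ENNReal.ofReal_mul (by positivity),
          ENNReal.ofReal_pow (by norm_num)]
        norm_num
        ring
    _ ≤ ∑' b : u, 5 ^ n * ∫⁻ y in closedBall (b : En n) (r b), v y := by
        gcongr with b
        exact (hr b (huE b.2)).le
    _ = 5 ^ n * ∫⁻ y in ⋃ b : u, closedBall (b : En n) (r b), v y := by
        rw [ENNReal.tsum_mul_left, lintegral_iUnion (fun _ => measurableSet_closedBall)]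
        intro a b hab
        exact hud a.2 b.2 (fun h => hab (Subtype.ext h))
    _ ≤ _ := mul_le_mul_right (setLIntegral_le_lintegral _ _) _

lemma dyad (F D : ℝ≥0∞) (hD : D ≠ 0) :
    F ≤ D + ∑' j : ℕ, 2 ^ j * D * (if 2 ^ j * D < F then 1 else 0) := by
  have hs : ∀ J : ℕ, D + ∑ j ∈ Finset.range J, 2 ^ j * D = 2 ^ J * D := by
    intro J
    induction J with
    | zero => simp
    | succ J ih => rw [Finset.sum_range_succ, ← add_assoc, ih]; ring
  have hk : ∀ J : ℕ, (∀ j < J, 2 ^ j * D < F) →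
      2 ^ J * D ≤ D + ∑' j : ℕ, 2 ^ j * D * (if 2 ^ j * D < F then 1 else 0) := by
    intro J hJ
    rw [← hs J]
    gcongr
    refine le_trans (le_of_eq ?_) (ENNReal.sum_le_tsum (Finset.range J))
    refine Finset.sum_congr rfl fun j hj => ?_
    rw [if_pos (hJ j (Finset.mem_range.1 hj)), mul_one]
  by_cases h : ∃ J : ℕ, F ≤ 2 ^ J * D
  · classical
    exact (Nat.find_spec h).trans (hk _ fun j hj => not_le.1 (Nat.find_min h hj))
  · push Not at h
    have hT : ∀ J : ℕ, 2 ^ J * D ≤ D + ∑' j : ℕ, 2 ^ j * D * (if 2 ^ j * D < F then 1 else 0) :=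
      fun J => hk J fun j _ => h j
    have ht : Filter.Tendsto (fun J : ℕ => (2:ℝ≥0∞) ^ J * D) Filter.atTop (nhds (⊤ * D)) := by
      refine ENNReal.Tendsto.mul_const ?_ (Or.inl (by simp))
      exact ENNReal.tendsto_pow_atTop_nhds_top_iff.2 (by norm_num)
    rw [ENNReal.top_mul hD] at ht
    have := le_of_tendsto' ht hT
    exact le_top.trans this

lemma logsum (a m : ℝ) (ha : 0 ≤ a) (hm : 0 < m) :
    ∑' j : ℕ, (ENNReal.ofReal a - 2 ^ j * ENNReal.ofReal m) ≤
      2 * ENNReal.ofReal (a * (1 + lnp (a / m))) := by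
  set N := ⌈Real.logb 2 (a / m)⌉₊ with hN
  rcases ha.eq_or_lt with rfl | ha
  · simp
  have hz : ∀ j ∉ Finset.range N, ENNReal.ofReal a - 2 ^ j * ENNReal.ofReal m = 0 := by
    intro j hj
    rw [Finset.mem_range, not_lt] at hj
    rw [tsub_eq_zero_iff_le]
    have h1 : Real.logb 2 (a / m) ≤ j := (Nat.le_ceil _).trans (by exact_mod_cast hj)
    rw [Real.logb_le_iff_le_rpow (by norm_num) (by positivity), Real.rpow_natCast,
      div_le_iff₀ hm] at h1
    refine (ENNReal.ofReal_le_ofReal h1).trans (le_of_eq ?_)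
    rw [ENNReal.ofReal_mul (by positivity), ENNReal.ofReal_pow (by norm_num)]
    norm_num
  rw [tsum_eq_sum hz]
  have hNle : (N : ℝ) ≤ 2 * (1 + lnp (a / m)) := by
    have h0 : 0 ≤ lnp (a / m) := le_max_right _ _
    by_cases hneg : Real.logb 2 (a / m) ≤ 0
    · have : N = 0 := Nat.ceil_eq_zero.2 hneg
      rw [this]; simp; linarith
    push Not at hneg
    have h1 : (N : ℝ) < Real.logb 2 (a / m) + 1 := Nat.ceil_lt_add_one hneg.le
    have h2 : Real.logb 2 (a / m) ≤ 2 * lnp (a / m) := by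
      unfold Real.logb
      rw [div_le_iff₀ (Real.log_pos (by norm_num))]
      have h3 : Real.log (a / m) ≤ lnp (a / m) := le_max_left _ _
      nlinarith [Real.log_two_gt_d9]
    linarith
  calc ∑ j ∈ Finset.range N, (ENNReal.ofReal a - 2 ^ j * ENNReal.ofReal m)
      ≤ ∑ j ∈ Finset.range N, ENNReal.ofReal a := Finset.sum_le_sum fun _ _ => tsub_le_self
    _ = ENNReal.ofReal (N * a) := by
        rw [ENNReal.ofReal_mul (by positivity)]; simp
    _ ≤ ENNReal.ofReal (2 * (a * (1 + lnp (a / m)))) := by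
        apply ENNReal.ofReal_le_ofReal; nlinarith
    _ = _ := by rw [ENNReal.ofReal_mul (by norm_num)]; norm_num

def Fe (n : ℕ) (φ h : En n → ℝ) (x : En n) : ℝ≥0∞ :=
  ⨆ t : {t : ℝ // 0 < t}, ‖phiConv n φ h t.1 x‖ₑ

lemma Mphi_eq (n : ℕ) (φ h : En n → ℝ) (x : En n) : Mphi n φ h x = (Fe n φ h x).toReal := by
  unfold Mphi Fe
  rw [ENNReal.toReal_iSup (fun _ => enorm_ne_top)]
  simp

lemma phiConv_cont (n : ℕ) (φ h : En n → ℝ) (hφ : Continuous φ) (K : ℝ) (hK : ∀ x, |φ x| ≤ K)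
    (hh : Integrable h) (t : ℝ) : Continuous (phiConv n φ h t) := by
  unfold phiConv
  refine continuous_of_dominated (bound := fun y => |(t ^ n)⁻¹| * K * |h y|) ?_ ?_ ?_ ?_
  · intro x
    exact (Continuous.aestronglyMeasurable (by fun_prop)).mul hh.aestronglyMeasurable
  · intro x
    refine Filter.Eventually.of_forall fun y => ?_
    rw [Real.norm_eq_abs, abs_mul, abs_mul]
    gcongr
    exact hK _
  · exact hh.abs.const_mul _
  · refine Filter.Eventually.of_forall fun y => ?_
    fun_prop

lemma Fe_meas (n : ℕ) (φ h : En n → ℝ) (hφ : Continuous φ) (K : ℝ) (hK : ∀ x, |φ x| ≤ K)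
    (hh : Integrable h) : Measurable (Fe n φ h) := by
  apply LowerSemicontinuous.measurable
  apply lowerSemicontinuous_iSup
  intro t
  exact (phiConv_cont n φ h hφ K hK hh t.1).enorm.lowerSemicontinuous

lemma phiConv_le (n : ℕ) (φ h : En n → ℝ) (K : ℝ) (hK : ∀ x, |φ x| ≤ K)
    (hs : ∀ x, x ∉ Metric.closedBall (0 : En n) 1 → φ x = 0) (t : ℝ) (ht : 0 < t) (x : En n) :
    ‖phiConv n φ h t x‖ₑ * volume (closedBall x t) ≤
      ENNReal.ofReal K * volume (ball (0 : En n) 1) * ∫⁻ y in closedBall x t, ‖h y‖ₑ := by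
  have hK0 : 0 ≤ K := (abs_nonneg _).trans (hK 0)
  have h1 : ‖phiConv n φ h t x‖ₑ ≤
      ENNReal.ofReal ((t ^ n)⁻¹ * K) * ∫⁻ y in closedBall x t, ‖h y‖ₑ := by
    rw [← lintegral_const_mul' _ _ ENNReal.ofReal_ne_top,
      ← lintegral_indicator measurableSet_closedBall]
    refine (enorm_integral_le_lintegral_enorm _).trans (lintegral_mono fun y => ?_)
    by_cases hy : y ∈ closedBall x t
    · rw [indicator_of_mem hy, enorm_mul]
      gcongr
      rw [Real.enorm_eq_ofReal_abs, abs_mul, abs_of_pos (by positivity : (0:ℝ) < (t ^ n)⁻¹)]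
      gcongr
      exact hK _
    · rw [hs, mul_zero, zero_mul, enorm_zero]
      · exact zero_le
      · rw [mem_closedBall_zero_iff, norm_smul, norm_inv, Real.norm_eq_abs, abs_of_pos ht]
        rw [mem_closedBall, dist_comm, dist_eq_norm, not_le] at hy
        rw [not_le, inv_mul_eq_div, one_lt_div ht]
        exact hy
  have h2 : volume (closedBall x t) = ENNReal.ofReal (t ^ n) * volume (ball (0 : En n) 1) := by
    rw [Measure.addHaar_closedBall _ _ ht.le]; simp
  calc _ ≤ (ENNReal.ofReal ((t ^ n)⁻¹ * K) * ∫⁻ y in closedBall x t, ‖h y‖ₑ) *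
        (ENNReal.ofReal (t ^ n) * volume (ball (0 : En n) 1)) := by rw [h2]; gcongr
    _ = (ENNReal.ofReal ((t ^ n)⁻¹ * K) * ENNReal.ofReal (t ^ n)) * volume (ball (0 : En n) 1)
        * ∫⁻ y in closedBall x t, ‖h y‖ₑ := by ring
    _ = _ := by
        rw [← ENNReal.ofReal_mul (by positivity)]
        congr 4
        field_simp

/-- near part -/
lemma near (n : ℕ) (hn : 1 ≤ n) (φ h : En n → ℝ) (hφ : Continuous φ)
    (K : ℝ) (hK0 : 0 < K) (hK : ∀ x, |φ x| ≤ K)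
    (hs : ∀ x, x ∉ Metric.closedBall (0 : En n) 1 → φ x = 0)
    (hh : Integrable h) (g : En n → ℝ) (hg0 : ∀ x, 0 ≤ g x) (hg : Integrable g) (m : ℝ) (hm : 0 < m)
    (hhg : ∀ x, |h x| ≤ g x + m) (S : Set (En n)) :
    ∫⁻ x in S, Fe n φ h x ≤ 3 * (ENNReal.ofReal K * volume (ball (0 : En n) 1)) *
      (ENNReal.ofReal m * volume S +
        5 ^ n * (2 * ∫⁻ x, ENNReal.ofReal (g x * (1 + lnp (g x / m))))) := by
  set c := ENNReal.ofReal K * volume (ball (0 : En n) 1) with hc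
  have hc0 : c ≠ 0 := mul_ne_zero (by simpa using hK0) (measure_ball_pos volume _ one_pos).ne'
  have hcT : c ≠ ⊤ := ENNReal.mul_ne_top ENNReal.ofReal_ne_top measure_ball_lt_top.ne
  set M := ENNReal.ofReal m with hM
  have hM0 : M ≠ 0 := by simpa [hM] using hm
  have hMT : M ≠ ⊤ := ENNReal.ofReal_ne_top
  have hFm : Measurable (Fe n φ h) := Fe_meas n φ h hφ K hK hh
  set D := 3 * c * M with hD
  have hD0 : D ≠ 0 := by simp [hD, hc0, hM0]
  have key : ∀ j : ℕ, 2 ^ j * D * volume {x | 2 ^ j * D < Fe n φ h x} ≤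
      3 * c * (5 ^ n * ∫⁻ y, (ENNReal.ofReal (g y) - 2 ^ j * M)) := by
    intro j
    set l := 2 ^ j * M with hl
    have hl0 : l ≠ 0 := mul_ne_zero (by positivity) hM0
    have hlT : l ≠ ⊤ := ENNReal.mul_ne_top (by simp) hMT
    have hMl : M ≤ l := by
      calc M = 1 * M := by simp
        _ ≤ 2 ^ j * M := by gcongr; exact one_le_pow₀ (by norm_num)
    have hDl : 2 ^ j * D = 3 * c * l := by rw [hD, hl]; ring
    have hfin : ∫⁻ y, (ENNReal.ofReal (g y) - l) ≠ ⊤ := by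
      refine ((lintegral_mono fun y => tsub_le_self).trans_lt ?_).ne
      exact hg.lintegral_lt_top
    have hw := weakT n hn (fun y => ENNReal.ofReal (g y) - l) hfin l hl0 hlT
    have hsub : {x | 2 ^ j * D < Fe n φ h x} ⊆ {x : En n | ∃ t : ℝ, 0 < t ∧
      l * volume (closedBall x t) < ∫⁻ y in closedBall x t, (ENNReal.ofReal (g y) - l)} := by
      intro x hx
      rw [Set.mem_ofPred_eq, hDl, Fe, lt_iSup_iff] at hx
      obtain ⟨⟨t, ht⟩, hx⟩ := hx
      refine ⟨t, ht, ?_⟩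
      by_contra hcon
      push Not at hcon
      set B := volume (closedBall x t) with hB
      have hB0 : B ≠ 0 := (measure_closedBall_pos volume _ ht).ne'
      have hBT : B ≠ ⊤ := measure_closedBall_lt_top.ne
      have h1 : ∫⁻ y in closedBall x t, ‖h y‖ₑ ≤ 3 * l * B := by
        calc ∫⁻ y in closedBall x t, ‖h y‖ₑ
            ≤ ∫⁻ y in closedBall x t, ((ENNReal.ofReal (g y) - l) + 2 * l) := by
              refine lintegral_mono fun y => ?_
              calc ‖h y‖ₑ ≤ ENNReal.ofReal (g y + m) := by
                    rw [Real.enorm_eq_ofReal_abs]; exact ENNReal.ofReal_le_ofReal (hhg y)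
                _ = ENNReal.ofReal (g y) + M := ENNReal.ofReal_add (hg0 y) hm.le
                _ ≤ ((ENNReal.ofReal (g y) - l) + l) + l := by
                    gcongr; exact le_tsub_add
                _ = _ := by ring
          _ = (∫⁻ y in closedBall x t, (ENNReal.ofReal (g y) - l)) + 2 * l * B := by
              rw [lintegral_add_right _ measurable_const]; simp [hB]
          _ ≤ l * B + 2 * l * B := by gcongr
          _ = _ := by ring
      have h2 := phiConv_le n φ h K hK hs t ht x
      have h3 : ‖phiConv n φ h t x‖ₑ * B ≤ (3 * c * l) * B :=
        h2.trans (by rw [← hc]; refine (mul_le_mul_right h1 c).trans (le_of_eq ?_); ring)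
      rw [ENNReal.mul_le_mul_iff_left hB0 hBT] at h3
      exact absurd h3 (not_le.2 hx)
    have e : 2 ^ j * D * volume {x | 2 ^ j * D < Fe n φ h x} =
        3 * c * (l * volume {x | 2 ^ j * D < Fe n φ h x}) := by
      rw [hD, hl]; ring
    rw [e]
    exact mul_le_mul_right ((mul_le_mul_right (measure_mono hsub) _).trans hw) _
  have hgm : ∀ j : ℕ, AEMeasurable (fun y => ENNReal.ofReal (g y) - 2 ^ j * M) := fun j =>
    hg.aemeasurable.ennreal_ofReal.sub aemeasurable_const
  calc ∫⁻ x in S, Fe n φ h x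
      ≤ ∫⁻ x in S, (D + ∑' j : ℕ, 2 ^ j * D * (if 2 ^ j * D < Fe n φ h x then 1 else 0)) :=
        lintegral_mono fun x => dyad _ _ hD0
    _ = D * volume S + ∑' j : ℕ, 2 ^ j * D * (volume.restrict S) {x | 2 ^ j * D < Fe n φ h x} := by
        rw [lintegral_add_left measurable_const, lintegral_tsum]
        · congr 1
          · simp
          · congr 1; ext j
            have hms : MeasurableSet {x | 2 ^ j * D < Fe n φ h x} :=
              measurableSet_lt measurable_const hFm
            rw [← lintegral_indicator_const hms]
            congr 1; ext x
            simp [indicator_apply]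
        · intro j
          refine Measurable.aemeasurable ?_
          exact measurable_const.mul (Measurable.ite (measurableSet_lt measurable_const hFm)
            measurable_const measurable_const)
    _ ≤ D * volume S + ∑' j : ℕ, 3 * c * (5 ^ n * ∫⁻ y, (ENNReal.ofReal (g y) - 2 ^ j * M)) := by
        refine add_le_add_right (ENNReal.tsum_le_tsum fun j => ?_) _
        exact le_trans (mul_le_mul_right (Measure.restrict_apply_le _ _) _) (key j)
    _ = D * volume S + 3 * c * (5 ^ n * ∫⁻ y, ∑' j : ℕ, (ENNReal.ofReal (g y) - 2 ^ j * M)) := by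
        rw [ENNReal.tsum_mul_left, ENNReal.tsum_mul_left, lintegral_tsum hgm]
    _ ≤ D * volume S + 3 * c * (5 ^ n *
          ∫⁻ y, 2 * ENNReal.ofReal (g y * (1 + lnp (g y / m)))) := by
        gcongr with y
        exact logsum _ _ (hg0 y) hm
    _ = _ := by
        rw [lintegral_const_mul' _ _ (by norm_num), hD]; ring

def zz (n : ℕ) (k : Fin n → ℤ) : En n := WithLp.toLp 2 (fun i => (k i : ℝ))

lemma Qk_eq (n : ℕ) (k : Fin n → ℤ) : Qk n k = (MeasurableEquiv.toLp 2 (Fin n → ℝ)).symm ⁻¹'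
    (Set.univ.pi fun i => Ioo ((k i : ℝ) - 1/2) ((k i : ℝ) + 1/2)) := by
  ext x
  simp [Qk, Set.mem_pi]

lemma Qk_meas (n : ℕ) (k : Fin n → ℤ) : MeasurableSet (Qk n k) := by
  rw [Qk_eq]
  exact (MeasurableEquiv.measurable _) (MeasurableSet.univ_pi fun i => measurableSet_Ioo)

lemma Qk_vol (n : ℕ) (k : Fin n → ℤ) : volume (Qk n k) = 1 := by
  rw [Qk_eq, (EuclideanSpace.volume_preserving_symm_measurableEquiv_toLp (Fin n)).measure_preimage
    (MeasurableSet.univ_pi fun i => measurableSet_Ioo).nullMeasurableSet, volume_pi_pi]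
  simp only [Real.volume_Ioo]
  refine Finset.prod_eq_one fun i _ => ?_
  ring_nf; simp

lemma Qk_norm (n : ℕ) (k : Fin n → ℤ) (y : En n) (hy : y ∈ Qk n k) : ‖y - zz n k‖ ≤ n := by
  rw [EuclideanSpace.norm_eq, Real.sqrt_le_left (by positivity)]
  calc ∑ i, ‖(y - zz n k) i‖ ^ 2 ≤ ∑ i : Fin n, (1:ℝ) := by
        refine Finset.sum_le_sum fun i _ => ?_
        have := hy i
        have h2 : (y - zz n k) i = y i - k i := by simp [zz]
        rw [h2, Real.norm_eq_abs, sq_abs]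
        nlinarith
    _ = n := by simp
    _ ≤ (n:ℝ) ^ 2 := by
        norm_cast
        nlinarith [Nat.le_self_pow (two_ne_zero) n]

lemma far (n : ℕ) (hn : 1 ≤ n) (φ h : En n → ℝ) (hφ : Continuous φ) (L : NNReal)
    (hL : LipschitzWith L φ) (K : ℝ) (hK : ∀ x, |φ x| ≤ K)
    (hs : ∀ x, x ∉ Metric.closedBall (0 : En n) 1 → φ x = 0)
    (hh : Integrable h) (hh0 : ∫ y, h y = 0) (z : En n) (hz : ∀ y, h y ≠ 0 → ‖y - z‖ ≤ n)
    (x : En n) (hx : 2 * (n : ℝ) < ‖x - z‖) :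
    Fe n φ h x ≤ ENNReal.ofReal ((L * n * 4 ^ (n + 1)) * (∫ y, |h y|)) *
      ENNReal.ofReal ((1 + ‖x - z‖) ^ (-((n : ℝ) + 1))) := by
  have hn1 : (1 : ℝ) ≤ n := by exact_mod_cast hn
  rw [← ENNReal.ofReal_mul (by positivity)]
  refine iSup_le fun ⟨t, ht⟩ => ?_
  rw [Real.enorm_eq_ofReal_abs]
  apply ENNReal.ofReal_le_ofReal
  set d := ‖x - z‖ with hd
  simp only
  rcases lt_or_ge t (d / 2) with htd | htd
  · have : phiConv n φ h t x = 0 := by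
      unfold phiConv
      rw [← integral_zero (En n) ℝ]
      congr 1; ext y
      by_cases hy : h y = 0
      · simp [hy]
      rw [hs, mul_zero, zero_mul]
      have h1 := hz y hy
      have h2 : d ≤ ‖x - y‖ + ‖y - z‖ := norm_sub_le_norm_sub_add_norm_sub x y z
      rw [mem_closedBall_zero_iff, norm_smul, norm_inv, Real.norm_eq_abs, abs_of_pos ht,
        not_le, inv_mul_eq_div, one_lt_div ht]
      linarith
    rw [this, abs_zero]
    have : 0 ≤ ∫ y, |h y| := integral_nonneg fun _ => abs_nonneg _
    positivity
  · have hint : Integrable (fun y => (t ^ n)⁻¹ * φ (t⁻¹ • (x - y)) * h y) := by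
      refine hh.bdd_mul (c := |(t ^ n)⁻¹| * K) (Continuous.aestronglyMeasurable (by fun_prop)) ?_
      refine Filter.Eventually.of_forall fun y => ?_
      rw [Real.norm_eq_abs, abs_mul]
      gcongr
      exact hK _
    have heq : phiConv n φ h t x =
        ∫ y, ((t ^ n)⁻¹ * φ (t⁻¹ • (x - y)) * h y - (t ^ n)⁻¹ * φ (t⁻¹ • (x - z)) * h y) := by
      rw [integral_sub hint (hh.const_mul _), integral_const_mul, hh0, mul_zero, sub_zero]
      rfl
    have hb : |phiConv n φ h t x| ≤ ∫ y, ((t ^ n)⁻¹ * (L * (t⁻¹ * n))) * |h y| := by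
      rw [heq, ← Real.norm_eq_abs]
      refine norm_integral_le_of_norm_le (hh.abs.const_mul _) ?_
      refine Filter.Eventually.of_forall fun y => ?_
      rw [← sub_mul, ← mul_sub, Real.norm_eq_abs, abs_mul, abs_mul,
        abs_of_pos (by positivity : (0:ℝ) < (t ^ n)⁻¹)]
      by_cases hy : h y = 0
      · simp [hy]
      gcongr
      have h1 := hL.dist_le_mul (t⁻¹ • (x - y)) (t⁻¹ • (x - z))
      rw [Real.dist_eq, dist_eq_norm, ← smul_sub, norm_smul, norm_inv, Real.norm_eq_abs,
        abs_of_pos ht, (by abel : x - y - (x - z) = z - y)] at h1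
      refine h1.trans ?_
      gcongr
      rw [norm_sub_rev]
      exact hz y hy
    rw [integral_const_mul] at hb
    refine hb.trans ?_
    have h4 : ((t ^ n)⁻¹ * (L * (t⁻¹ * n))) = L * n * (t⁻¹) ^ (n + 1) := by
      rw [pow_succ, inv_pow]; ring
    have h5 : (1 + d) ^ (-((n : ℝ) + 1)) = ((1 + d)⁻¹) ^ (n + 1) := by
      rw [Real.rpow_neg (by positivity), inv_pow]; norm_cast
    have h6 : t⁻¹ ≤ 4 * (1 + d)⁻¹ := by
      rw [← div_eq_mul_inv, inv_eq_one_div, div_le_div_iff₀ ht (by positivity)]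
      linarith
    have hI : 0 ≤ ∫ y, |h y| := integral_nonneg fun _ => abs_nonneg _
    rw [h4, h5]
    calc L * n * (t⁻¹) ^ (n + 1) * (∫ y, |h y|)
        ≤ L * n * (4 * (1 + d)⁻¹) ^ (n + 1) * (∫ y, |h y|) := by gcongr
      _ = _ := by rw [mul_pow]; ring

lemma test_bdd (n : ℕ) (φ : En n → ℝ) (hφ : IsTestFun n φ) :
    Continuous φ ∧ (∃ K : ℝ, 0 < K ∧ ∀ x, |φ x| ≤ K) ∧ ∃ L, LipschitzWith L φ := by
  obtain ⟨h1, h2, -⟩ := hφ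
  have hc : HasCompactSupport φ := HasCompactSupport.intro (isCompact_closedBall _ _) h2
  refine ⟨h1.continuous, ?_, ?_⟩
  · obtain ⟨C, hC⟩ := hc.exists_bound_of_continuous h1.continuous
    exact ⟨max C 1, by positivity, fun x => (hC x).trans (le_max_left _ _)⟩
  · obtain ⟨L, hL⟩ := h1.lipschitzWith_of_hasCompactSupport hc (by simp)
    exact ⟨L, hL⟩

def Ik (n : ℕ) (f : En n → ℝ) (k : Fin n → ℤ) : ℝ≥0∞ :=
  ∫⁻ x in Qk n k, ENNReal.ofReal (|f x| * (1 + lnp (|f x| / muk n f k)))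

lemma muk_le (n : ℕ) (f : En n → ℝ) (hf : Integrable f) (k : Fin n → ℤ) :
    ENNReal.ofReal (muk n f k) ≤ Ik n f k := by
  unfold muk Ik
  rw [ofReal_integral_eq_lintegral_ofReal hf.abs.integrableOn
    (Filter.Eventually.of_forall fun _ => abs_nonneg _)]
  refine lintegral_mono fun x => ENNReal.ofReal_le_ofReal ?_
  have : 0 ≤ lnp (|f x| / muk n f k) := le_max_right _ _
  nlinarith [abs_nonneg (f x)]

def HK (n : ℕ) (f : En n → ℝ) (k : Fin n → ℤ) : En n → ℝ :=
  (Qk n k).indicator (fun y => f y - ∫ z in Qk n k, f z)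

lemma HK_int (n : ℕ) (f : En n → ℝ) (hf : Integrable f) (k : Fin n → ℤ) :
    Integrable (HK n f k) := by
  have : IsFiniteMeasure (volume.restrict (Qk n k)) := ⟨by simp [Qk_vol]⟩
  exact (integrable_indicator_iff (Qk_meas n k)).2 (hf.integrableOn.sub (integrable_const _))

lemma HK_zero (n : ℕ) (f : En n → ℝ) (hf : Integrable f) (k : Fin n → ℤ) :
    ∫ y, HK n f k y = 0 := by
  have : IsFiniteMeasure (volume.restrict (Qk n k)) := ⟨by simp [Qk_vol]⟩
  unfold HK
  rw [integral_indicator (Qk_meas n k), integral_sub hf.integrableOn (integrable_const _)]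
  simp [Measure.real, Qk_vol]

lemma abs_int_le (n : ℕ) (f : En n → ℝ) (k : Fin n → ℤ) :
    |∫ z in Qk n k, f z| ≤ muk n f k := abs_integral_le_integral_abs

lemma HK_abs (n : ℕ) (f : En n → ℝ) (k : Fin n → ℤ) (x : En n) :
    |HK n f k x| ≤ (Qk n k).indicator (fun y => |f y| + muk n f k) x := by
  unfold HK
  by_cases hx : x ∈ Qk n k
  · simp only [indicator_of_mem hx]
    exact (abs_sub _ _).trans (add_le_add_right (abs_int_le n f k) _)
  · simp [indicator_of_notMem hx]

lemma HK_norm (n : ℕ) (f : En n → ℝ) (hf : Integrable f) (k : Fin n → ℤ) :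
    ∫ y, |HK n f k y| ≤ 2 * muk n f k := by
  have : IsFiniteMeasure (volume.restrict (Qk n k)) := ⟨by simp [Qk_vol]⟩
  have hi : IntegrableOn (fun y => |f y| + muk n f k) (Qk n k) :=
    hf.abs.integrableOn.add (integrable_const _)
  refine (integral_mono (HK_int n f hf k).abs
    ((integrable_indicator_iff (Qk_meas n k)).2 hi) (HK_abs n f k)).trans ?_
  rw [integral_indicator (Qk_meas n k), integral_add hf.abs.integrableOn (integrable_const _)]
  simp [Measure.real, Qk_vol]
  rw [two_mul]; rfl

lemma onek (n : ℕ) (hn : 1 ≤ n) (φ : En n → ℝ) (hφ : IsTestFun n φ) :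
    ∃ C : ℝ≥0∞, C ≠ ⊤ ∧ ∀ (f : En n → ℝ) (_ : Integrable f) (k : Fin n → ℤ),
      ∫⁻ x, Fe n φ (HK n f k) x ≤ C * Ik n f k := by
  obtain ⟨hc, ⟨K, hK0, hK⟩, L, hL⟩ := test_bdd n φ hφ
  set J : ℝ≥0∞ := ∫⁻ x : En n, ENNReal.ofReal ((1 + ‖x‖) ^ (-((n : ℝ) + 1))) with hJ
  have hJT : J ≠ ⊤ := by
    have := integrable_one_add_norm (E := En n) (μ := volume) (r := (n : ℝ) + 1) (by simp)
    exact this.lintegral_lt_top.ne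
  set V := volume (closedBall (0 : En n) (2 * n)) with hV
  have hVT : V ≠ ⊤ := measure_closedBall_lt_top.ne
  have hBT : volume (ball (0 : En n) 1) ≠ ⊤ := measure_ball_lt_top.ne
  refine ⟨3 * (ENNReal.ofReal K * volume (ball (0 : En n) 1)) * (V + 5 ^ n * 2) +
    ENNReal.ofReal ((L * n * 4 ^ (n + 1)) * 2) * J, by finiteness, ?_⟩
  intro f hf k
  set m := muk n f k with hm
  have hm0 : 0 ≤ m := integral_nonneg fun _ => abs_nonneg _
  rcases hm0.eq_or_lt with hm1 | hmpos
  · have h0 : HK n f k =ᵐ[volume] 0 := by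
      have h1 : ∫ y, |HK n f k y| = 0 :=
        le_antisymm ((HK_norm n f hf k).trans (by rw [← hm, ← hm1]; simp))
          (integral_nonneg fun _ => abs_nonneg _)
      rw [integral_eq_zero_iff_of_nonneg (fun _ => abs_nonneg _) (HK_int n f hf k).abs] at h1
      filter_upwards [h1] with y hy
      simpa using hy
    have h2 : ∀ x, Fe n φ (HK n f k) x = 0 := by
      intro x
      unfold Fe
      rw [iSup_eq_zero]
      intro t
      unfold phiConv
      rw [integral_eq_zero_of_ae, enorm_zero]
      filter_upwards [h0] with y hy
      simp [hy]
    simp [h2]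
  set z := zz n k with hz
  set S := closedBall z (2 * n) with hS
  have hSV : volume S = V := Measure.addHaar_closedBall_center _ _ _
  have hSm : MeasurableSet S := measurableSet_closedBall
  have hmI : ENNReal.ofReal m ≤ Ik n f k := muk_le n f hf k
  rw [← lintegral_add_compl _ hSm, add_mul]
  refine add_le_add ?_ ?_
  · have h1 := near n hn φ (HK n f k) hc K hK0 hK hφ.2.1 (HK_int n f hf k)
      ((Qk n k).indicator fun y => |f y|) (fun x => indicator_nonneg (fun _ _ => abs_nonneg _) x)
      (hf.abs.indicator (Qk_meas n k)) m hmpos (fun x => by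
        refine (HK_abs n f k x).trans ?_
        by_cases hx : x ∈ Qk n k
        · simp [indicator_of_mem hx, hm]
        · simp [indicator_of_notMem hx, hm0]) S
    have h2 : ∫⁻ x, ENNReal.ofReal ((Qk n k).indicator (fun y => |f y|) x *
        (1 + lnp ((Qk n k).indicator (fun y => |f y|) x / m))) = Ik n f k := by
      unfold Ik
      rw [← lintegral_indicator (Qk_meas n k)]
      congr 1; ext x
      by_cases hx : x ∈ Qk n k
      · simp [indicator_of_mem hx, hm]
      · simp [indicator_of_notMem hx]
    rw [h2, hSV] at h1
    refine h1.trans ?_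
    rw [mul_assoc (3 * _)]
    refine mul_le_mul_right ?_ _
    calc _ ≤ Ik n f k * V + 5 ^ n * (2 * Ik n f k) := by gcongr
      _ = _ := by ring
  · calc ∫⁻ x in Sᶜ, Fe n φ (HK n f k) x
        ≤ ∫⁻ x in Sᶜ, ENNReal.ofReal ((L * n * 4 ^ (n + 1)) * (∫ y, |HK n f k y|)) *
          ENNReal.ofReal ((1 + ‖x - z‖) ^ (-((n : ℝ) + 1))) := by
          refine setLIntegral_mono' hSm.compl fun x hx => ?_
          refine far n hn φ _ hc L hL K hK hφ.2.1 (HK_int n f hf k) (HK_zero n f hf k) z ?_ x ?_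
          · intro y hy
            exact Qk_norm n k y (mem_of_indicator_ne_zero hy)
          · simpa [hS, dist_eq_norm] using hx
      _ ≤ ∫⁻ x, ENNReal.ofReal ((L * n * 4 ^ (n + 1)) * (∫ y, |HK n f k y|)) *
          ENNReal.ofReal ((1 + ‖x - z‖) ^ (-((n : ℝ) + 1))) := setLIntegral_le_lintegral _ _
      _ = ENNReal.ofReal ((L * n * 4 ^ (n + 1)) * (∫ y, |HK n f k y|)) * J := by
          rw [lintegral_const_mul' _ _ ENNReal.ofReal_ne_top, hJ]
          congr 1
          exact lintegral_sub_right_eq_self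
            (fun x : En n => ENNReal.ofReal ((1 + ‖x‖) ^ (-((n : ℝ) + 1)))) z
      _ ≤ ENNReal.ofReal ((L * n * 4 ^ (n + 1)) * (2 * m)) * J := by
          gcongr
          exact HK_norm n f hf k
      _ = ENNReal.ofReal ((L * n * 4 ^ (n + 1)) * 2) * J * ENNReal.ofReal m := by
          rw [← mul_assoc, ENNReal.ofReal_mul (q := m) (by positivity)]; ring
      _ ≤ _ := by gcongr

/-- **Proposition (the localized part is in `H^1`).**
If `f` is integrable and satisfies the local `L log L` condition
`∑_k ∫_{Q_k} |f_k|(1 + ln₊(|f_k|/μ_k)) < ∞`, then, with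
`h_k = f_k - (∫ f_k) χ_{Q_k}` and `h = ∑_k h_k`, one has
`∑_k ‖𝓜_φ h_k‖_{L^1} < ∞` for every admissible `φ`, and `h ∈ H^1(ℝ^n)`. -/
theorem localized_part_in_H1 (n : ℕ) (hn : 1 ≤ n) (f : En n → ℝ)
    (hf : Integrable f)
    (hcond : ∑' k : Fin n → ℤ,
        ∫⁻ x in Qk n k, ENNReal.ofReal (|f x| * (1 + lnp (|f x| / muk n f k))) < ⊤)
    (hk : (Fin n → ℤ) → En n → ℝ)
    (hhk : ∀ k, hk k = (Qk n k).indicator (fun y => f y - ∫ z in Qk n k, f z))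
    (h : En n → ℝ) (hh : ∀ x, h x = ∑' k : Fin n → ℤ, hk k x) :
    (∀ φ : En n → ℝ, IsTestFun n φ →
        ∑' k : Fin n → ℤ, ∫⁻ x, ENNReal.ofReal (Mphi n φ (hk k) x) < ⊤) ∧
      MemH1 n h := by
  have hHK : hk = HK n f := funext hhk
  subst hHK
  have hsum : ∑' k, Ik n f k ≠ ⊤ := hcond.ne
  have hmain : ∀ φ : En n → ℝ, IsTestFun n φ →
      ∑' k : Fin n → ℤ, ∫⁻ x, Fe n φ (HK n f k) x < ⊤ := by
    intro φ hφ
    obtain ⟨C, hC, hb⟩ := onek n hn φ hφ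
    refine (ENNReal.tsum_le_tsum fun k => hb f hf k).trans_lt ?_
    rw [ENNReal.tsum_mul_left]
    exact ENNReal.mul_lt_top hC.lt_top hsum.lt_top
  have hnorm : ∑' k, ∫⁻ y, ‖HK n f k y‖ₑ ≠ ⊤ := by
    have h1 : ∀ k, ∫⁻ y, ‖HK n f k y‖ₑ ≤ 2 * Ik n f k := by
      intro k
      rw [← ofReal_integral_norm_eq_lintegral_enorm (HK_int n f hf k)]
      refine (ENNReal.ofReal_le_ofReal (HK_norm n f hf k)).trans ?_
      rw [ENNReal.ofReal_mul (by norm_num)]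
      norm_num
      exact mul_le_mul_right (muk_le n f hf k) _
    refine ((ENNReal.tsum_le_tsum h1).trans_lt ?_).ne
    rw [ENNReal.tsum_mul_left]
    exact ENNReal.mul_lt_top (by norm_num) hsum.lt_top
  refine ⟨fun φ hφ => ?_, fun φ hφ => ?_⟩
  · refine (ENNReal.tsum_le_tsum fun k => lintegral_mono fun x => ?_).trans_lt (hmain φ hφ)
    rw [Mphi_eq]
    exact ENNReal.ofReal_toReal_le
  · obtain ⟨hc, ⟨K, hK0, hK⟩, -⟩ := test_bdd n φ hφ
    have hheq : h = fun x => ∑' k, HK n f k x := funext hh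
    have hle : ∀ x, ‖h x‖ₑ ≤ ∑' k, ‖HK n f k x‖ₑ := fun x => by
      rw [hh]; exact enorm_tsum_le_tsum_enorm
    have hhint : Integrable h := by
      refine ⟨?_, ?_⟩
      · rw [hheq]
        exact (AEMeasurable.tsum fun k => (HK_int n f hf k).aemeasurable).aestronglyMeasurable
      · refine (lintegral_mono hle).trans_lt ?_
        rw [lintegral_tsum fun k => (HK_int n f hf k).aestronglyMeasurable.enorm]
        exact hnorm.lt_top
    have hF : ∀ x, Fe n φ h x ≤ ∑' k, Fe n φ (HK n f k) x := by
      intro x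
      refine iSup_le fun t => ?_
      have h1 : phiConv n φ h t x = ∑' k, phiConv n φ (HK n f k) t x := by
        unfold phiConv
        rw [← integral_tsum]
        · congr 1; ext y
          rw [hh, tsum_mul_left]
        · intro k
          exact (Continuous.aestronglyMeasurable (by fun_prop)).mul
            (HK_int n f hf k).aestronglyMeasurable
        · refine ((ENNReal.tsum_le_tsum (g := fun k => ENNReal.ofReal (|((t:ℝ) ^ n)⁻¹| * K) *
            ∫⁻ y, ‖HK n f k y‖ₑ) fun k => ?_).trans_lt ?_).ne
          · rw [← lintegral_const_mul' _ _ ENNReal.ofReal_ne_top]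
            refine lintegral_mono fun y => ?_
            rw [enorm_mul]
            gcongr
            rw [Real.enorm_eq_ofReal_abs, abs_mul]
            gcongr
            exact hK _
          · rw [ENNReal.tsum_mul_left]
            exact ENNReal.mul_lt_top ENNReal.ofReal_lt_top hnorm.lt_top
      rw [h1]
      refine enorm_tsum_le_tsum_enorm.trans (ENNReal.tsum_le_tsum fun k => ?_)
      exact le_iSup (fun t : {t : ℝ // 0 < t} => ‖phiConv n φ (HK n f k) t.1 x‖ₑ) t
    have hM : Mphi n φ h = fun x => (Fe n φ h x).toReal := funext (Mphi_eq n φ h)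
    have hFm := Fe_meas n φ h hc K hK hhint
    rw [hM]
    refine integrable_toReal_of_lintegral_ne_top hFm.aemeasurable ?_
    refine ((lintegral_mono hF).trans_lt ?_).ne
    rw [lintegral_tsum fun k => (Fe_meas n φ _ hc K hK (HK_int n f hf k)).aemeasurable]
    exact hmain φ hφ
end
end

section
/- Let n ≥ 1 and let φ be a smooth function on ℝ^n supported in the closed unit ball with ∫φ = 1. There is a constant C = C(n,φ) such that for every j ∈ ℤ^n with |j| > 2 and every measurable function a on ℝ^n with |a| ≤ 1 almost everywhere, ∫ a dx = 0, and a supported in Q_0 ∪ Q_j, one has ‖𝓜_φ a‖_{L^1(ℝ^n)} ≤ C (1 + ln|j|). -/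
open MeasureTheory Real Set Metric ENNReal

noncomputable section

lemma intAux (n : ℕ) (hn : 1 ≤ n) : ∃ W : ℝ, 0 ≤ W ∧ ∀ ε : ℝ, 0 < ε →
    Integrable (fun x : En n => (1 + ‖x‖) ^ (-((n : ℝ) + ε))) ∧
    ∫ x : En n, (1 + ‖x‖) ^ (-((n : ℝ) + ε)) ≤ W / ε := by
  have : Nonempty (Fin n) := ⟨⟨0, hn⟩⟩
  refine ⟨n * volume.real (ball (0 : En n) 1), by positivity, fun ε hε => ?_⟩
  have hI : Integrable (fun x : En n => (1 + ‖x‖) ^ (-((n : ℝ) + ε))) := by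
    apply integrable_one_add_norm
    simp [hε]
  refine ⟨hI, ?_⟩
  have hI2 := (integrable_fun_norm_addHaar (volume : Measure (En n))
    (f := fun y : ℝ => (1 + y) ^ (-((n : ℝ) + ε)))).1 hI
  have e := integral_fun_norm_addHaar (volume : Measure (En n))
    (fun y : ℝ => (1 + y) ^ (-((n : ℝ) + ε)))
  rw [e]
  simp only [finrank_euclideanSpace, Fintype.card_fin, nsmul_eq_mul, smul_eq_mul] at hI2 ⊢
  rw [← mul_assoc, div_eq_mul_inv]
  apply mul_le_mul_of_nonneg_left _ (by positivity)
  have hmp := measurePreserving_add_left (volume : Measure ℝ) 1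
  have hemb : MeasurableEmbedding (fun y : ℝ => 1 + y) :=
    (Homeomorph.addLeft (1 : ℝ)).measurableEmbedding
  have hpre : (fun y : ℝ => 1 + y) ⁻¹' (Ioi 1) = Ioi 0 := by ext; simp
  have h1 := hmp.setIntegral_preimage_emb hemb (fun y => y ^ (-(1 + ε))) (Ioi 1)
  have h2 := (hmp.integrableOn_comp_preimage hemb (f := fun y => y ^ (-(1 + ε))) (s := Ioi 1)).2
    (integrableOn_Ioi_rpow_of_lt (by linarith) one_pos)
  rw [hpre] at h1 h2
  rw [integral_Ioi_rpow_of_lt (by linarith) one_pos] at h1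
  have h3 : -(1 : ℝ) ^ (-(1 + ε) + 1) / (-(1 + ε) + 1) = ε⁻¹ := by
    rw [Real.one_rpow, show -(1 + ε) + 1 = -ε by ring, neg_div_neg_eq, one_div]
  rw [h3] at h1
  rw [← h1]
  refine setIntegral_mono_on hI2 h2 measurableSet_Ioi fun y hy => ?_
  have hy : 0 < y := hy
  calc y ^ (n - 1) * (1 + y) ^ (-((n : ℝ) + ε))
      ≤ (1 + y) ^ (n - 1) * (1 + y) ^ (-((n : ℝ) + ε)) := by gcongr; linarith
    _ = _ := by
      rw [← Real.rpow_natCast, ← Real.rpow_add (by linarith), Nat.cast_sub hn]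
      congr 1; push_cast; ring

lemma interp {c B s R ε : ℝ} {n : ℕ} (hB : 0 ≤ B) (hs : 0 < s) (hR : 0 < R) (h0 : 0 < ε)
    (h1 : ε ≤ 1) (b1 : c ≤ B * (s ^ n)⁻¹) (b2 : c ≤ B * (s ^ n)⁻¹ * (R / s)) :
    c ≤ B * R ^ ε * s ^ (-((n : ℝ) + ε)) := by
  have key : c ≤ B * (s ^ n)⁻¹ * (R / s) ^ ε := by
    rcases le_total (R / s) 1 with h | h
    · refine b2.trans ?_
      gcongr
      nth_rw 1 [← Real.rpow_one (R / s)]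
      exact Real.rpow_le_rpow_of_exponent_ge (by positivity) h h1
    · refine b1.trans (le_mul_of_one_le_right (by positivity) (Real.one_le_rpow h h0.le))
  refine key.trans (le_of_eq ?_)
  rw [Real.rpow_neg hs.le, Real.rpow_add hs, Real.rpow_natCast, Real.div_rpow hR.le hs.le]
  field_simp

lemma norm_Qk {n : ℕ} {k : Fin n → ℤ} {y : En n} (hy : y ∈ Qk n k) : ‖y - zv n k‖ ≤ √n := by
  rw [EuclideanSpace.norm_eq]
  apply Real.sqrt_le_sqrt
  have : ∀ i ∈ Finset.univ, ‖(y - zv n k) i‖ ^ 2 ≤ (1 : ℝ) := by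
    intro i _
    have h := hy i
    have e : (y - zv n k) i = y i - k i := by simp [zv]
    rw [e, Real.norm_eq_abs, sq_abs]
    nlinarith
  simpa using Finset.sum_le_sum this

lemma conv_bound (n : ℕ) (φ : En n → ℝ) (hφ : IsTestFun n φ) :
    ∃ D : ℝ, 0 ≤ D ∧ ∀ j : Fin n → ℤ, 2 < ‖zv n j‖ →
      ∀ a : En n → ℝ, Measurable a →
        (∀ᵐ x ∂(volume : Measure (En n)), |a x| ≤ 1) →
        (∫ x, a x) = 0 →
        (∀ x, x ∉ Qk n 0 ∪ Qk n j → a x = 0) → ∀ (t : ℝ) (_ : 0 < t) (x : En n),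
        |phiConv n φ a t x| ≤ D ∧ |phiConv n φ a t x| ≤ D * (t ^ n)⁻¹ ∧
        |phiConv n φ a t x| ≤ D * (t ^ n)⁻¹ * (‖zv n j‖ / t) ∧
        (phiConv n φ a t x = 0 ∨ ‖x‖ ≤ t + √n ∨ ‖x - zv n j‖ ≤ t + √n) := by
  obtain ⟨hsm, hsupp, -⟩ := hφ
  have hcs : HasCompactSupport φ := HasCompactSupport.intro (isCompact_closedBall 0 1) hsupp
  have hcont := hsm.continuous
  obtain ⟨L, hL⟩ := ContDiff.lipschitzWith_of_hasCompactSupport hcs hsm (by simp)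
  obtain ⟨M, hM⟩ := hcs.exists_bound_of_continuous hcont
  have hM0 : 0 ≤ M := (norm_nonneg _).trans (hM 0)
  have hφi : Integrable φ := hcont.integrable_of_hasCompactSupport hcs
  set d := √(n : ℝ) with hd
  have hd0 : 0 ≤ d := Real.sqrt_nonneg _
  set V := volume.real (closedBall (0 : En n) d) with hV
  set A := ∫ x, |φ x| with hA
  have hA0 : 0 ≤ A := integral_nonneg fun _ => abs_nonneg _
  have hV0 : 0 ≤ V := measureReal_nonneg
  refine ⟨A + M * (2 * V) + L * (1 + d) * (2 * V), by positivity, ?_⟩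
  intro j hj a ham ha1 ha0 has t ht x
  set z := zv n j with hz
  have hz0 : zv n 0 = 0 := by ext; simp [zv]
  set S := closedBall (0 : En n) d ∪ closedBall z d with hS
  have hSsupp : ∀ y, y ∉ S → a y = 0 := by
    intro y hy
    apply has
    rintro (h | h)
    · have := norm_Qk h
      rw [hz0] at this
      exact hy (Or.inl (by simpa using this))
    · exact hy (Or.inr (by simpa [dist_eq_norm] using norm_Qk h))
  have hSm : MeasurableSet S := measurableSet_closedBall.union measurableSet_closedBall
  have hSfin : volume S < ⊤ :=
    measure_union_lt_top measure_closedBall_lt_top measure_closedBall_lt_top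
  have hSV : volume.real S ≤ 2 * V := by
    refine (measureReal_union_le _ _).trans (le_of_eq ?_)
    rw [hV, two_mul]
    congr 1
    simp only [Measure.real, Measure.addHaar_closedBall_center]
  have hind : Integrable (S.indicator (fun _ => (1 : ℝ))) :=
    (integrable_indicator_iff hSm).2 (integrableOn_const hSfin.ne)
  have hale : ∀ᵐ y, |a y| ≤ S.indicator (fun _ => (1 : ℝ)) y := by
    filter_upwards [ha1] with y hy
    by_cases h : y ∈ S
    · simpa [h] using hy
    · simp [h, hSsupp y h]
  have hai : Integrable a := hind.mono' ham.aestronglyMeasurable hale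
  have haV : ∫ y, |a y| ≤ 2 * V := by
    refine le_trans (integral_mono_ae hai.abs hind hale) ?_
    rw [integral_indicator hSm]
    simpa using hSV
  have hkc : Continuous (fun y => (t ^ n)⁻¹ * φ (t⁻¹ • (x - y))) := by fun_prop
  have hki : Integrable (fun y => (t ^ n)⁻¹ * |φ (t⁻¹ • (x - y))|) := by
    have h1 : Integrable (fun y => |φ (t⁻¹ • y)|) := (hφi.comp_smul (inv_ne_zero ht.ne')).abs
    exact (h1.comp_sub_left x).const_mul _
  have hkA : ∫ y, (t ^ n)⁻¹ * |φ (t⁻¹ • (x - y))| = A := by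
    rw [integral_const_mul, integral_sub_left_eq_self (fun y => |φ (t⁻¹ • y)|) volume x,
      Measure.integral_comp_inv_smul_of_nonneg volume (fun y => |φ y|) ht.le]
    simp only [finrank_euclideanSpace, Fintype.card_fin, smul_eq_mul]
    field_simp
    rfl
  have bA : |phiConv n φ a t x| ≤ A := by
    rw [← hkA, ← Real.norm_eq_abs]
    refine norm_integral_le_of_norm_le hki ?_
    filter_upwards [ha1] with y hy
    rw [norm_mul, norm_mul, Real.norm_of_nonneg (by positivity : 0 ≤ (t ^ n)⁻¹)]
    exact mul_le_of_le_one_right (by positivity) hy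
  have bM : |phiConv n φ a t x| ≤ M * (2 * V) * (t ^ n)⁻¹ := by
    have : |phiConv n φ a t x| ≤ ∫ y, ((t ^ n)⁻¹ * M) * |a y| := by
      rw [← Real.norm_eq_abs]
      refine norm_integral_le_of_norm_le (hai.abs.const_mul _) (Filter.Eventually.of_forall ?_)
      intro y
      rw [norm_mul, norm_mul, Real.norm_of_nonneg (by positivity : 0 ≤ (t ^ n)⁻¹)]
      have := hM (t⁻¹ • (x - y))
      rw [Real.norm_eq_abs (a y)]
      gcongr
    refine this.trans ?_
    rw [integral_const_mul]
    calc (t ^ n)⁻¹ * M * ∫ y, |a y| ≤ (t ^ n)⁻¹ * M * (2 * V) := by gcongr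
      _ = _ := by ring
  have hSn : ∀ y ∈ S, ‖y‖ ≤ ‖z‖ + d := by
    rintro y (h | h)
    · have : ‖y‖ ≤ d := by simpa using h
      linarith [norm_nonneg z]
    · have h' : ‖y - z‖ ≤ d := by simpa [dist_eq_norm] using h
      have := norm_add_le (y - z) z
      rw [sub_add_cancel] at this
      linarith
  have bL : |phiConv n φ a t x| ≤ L * (1 + d) * (2 * V) * (t ^ n)⁻¹ * (‖z‖ / t) := by
    have e : phiConv n φ a t x =
        ∫ y, (t ^ n)⁻¹ * (φ (t⁻¹ • (x - y)) - φ (t⁻¹ • x)) * a y := by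
      have i1 : Integrable (fun y => (t ^ n)⁻¹ * φ (t⁻¹ • (x - y)) * a y) := by
        refine hai.bdd_mul (c := (t ^ n)⁻¹ * M) hkc.aestronglyMeasurable
          (Filter.Eventually.of_forall fun y => ?_)
        rw [norm_mul, Real.norm_of_nonneg (by positivity : 0 ≤ (t ^ n)⁻¹)]
        have := hM (t⁻¹ • (x - y))
        gcongr
      have i2 : Integrable (fun y => ((t ^ n)⁻¹ * φ (t⁻¹ • x)) * a y) := hai.const_mul _
      have i3 : ∫ y, ((t ^ n)⁻¹ * φ (t⁻¹ • x)) * a y = 0 := by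
        rw [integral_const_mul, ha0, mul_zero]
      rw [phiConv, ← sub_zero (∫ y, (t ^ n)⁻¹ * φ (t⁻¹ • (x - y)) * a y), ← i3,
        ← integral_sub i1 i2]
      congr 1
      ext y
      ring
    have : |phiConv n φ a t x| ≤ ∫ y, ((t ^ n)⁻¹ * (L * (t⁻¹ * (‖z‖ + d)))) * |a y| := by
      rw [e, ← Real.norm_eq_abs]
      refine norm_integral_le_of_norm_le (hai.abs.const_mul _) (Filter.Eventually.of_forall ?_)
      intro y
      by_cases hy : y ∈ S
      · rw [norm_mul, norm_mul, Real.norm_of_nonneg (by positivity : 0 ≤ (t ^ n)⁻¹),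
          Real.norm_eq_abs (a y)]
        have h1 := hL.norm_sub_le (t⁻¹ • (x - y)) (t⁻¹ • x)
        rw [← smul_sub, sub_sub_cancel_left, norm_smul, norm_neg,
          Real.norm_of_nonneg (inv_nonneg.2 ht.le)] at h1
        have h2 := hSn y hy
        have h3 : (L : ℝ) * (t⁻¹ * ‖y‖) ≤ L * (t⁻¹ * (‖z‖ + d)) := by gcongr
        have h4 := h1.trans h3
        gcongr
      · simp [hSsupp y hy]
    refine this.trans ?_
    rw [integral_const_mul]
    calc (t ^ n)⁻¹ * (L * (t⁻¹ * (‖z‖ + d))) * ∫ y, |a y|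
        ≤ (t ^ n)⁻¹ * (L * (t⁻¹ * ((1 + d) * ‖z‖))) * (2 * V) := by
          gcongr
          nlinarith
      _ = _ := by ring
  have p1 : 0 ≤ M * (2 * V) := by positivity
  have p2 : 0 ≤ L * (1 + d) * (2 * V) := by positivity
  refine ⟨by linarith, bM.trans ?_, bL.trans ?_, ?_⟩
  · gcongr; linarith
  · gcongr; linarith
  · by_contra! hcon
    obtain ⟨h0, h1, h2⟩ := hcon
    apply h0
    rw [phiConv]
    apply integral_eq_zero_of_ae
    refine Filter.Eventually.of_forall fun y => ?_
    by_cases hy : y ∈ S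
    · have hxy : t < ‖x - y‖ := by
        rcases hy with h | h
        · have h : ‖y‖ ≤ d := by simpa using h
          have := norm_sub_norm_le x y
          linarith
        · have h : ‖y - z‖ ≤ d := by simpa [dist_eq_norm] using h
          have := norm_add_le (x - y) (y - z)
          rw [sub_add_sub_cancel] at this
          linarith
      have : φ (t⁻¹ • (x - y)) = 0 := by
        apply hsupp
        rw [mem_closedBall_zero_iff, norm_smul, Real.norm_of_nonneg (inv_nonneg.2 ht.le), not_le,
          inv_mul_eq_div, one_lt_div ht]
        exact hxy
      simp [this]
    · simp [hSsupp y hy]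

lemma scalar_bound {c D K t s R ε : ℝ} {n : ℕ} (hD : 0 ≤ D) (hK : 1 ≤ K) (ht : 0 < t)
    (hs : 1 ≤ s) (hst : s ≤ t + K - 1) (hR : 1 ≤ R) (h0 : 0 < ε) (h1 : ε ≤ 1)
    (b0 : c ≤ D) (b1 : c ≤ D * (t ^ n)⁻¹) (b2 : c ≤ D * (t ^ n)⁻¹ * (R / t)) :
    c ≤ D * K ^ (n + 1) * R ^ ε * s ^ (-((n : ℝ) + ε)) := by
  have hs0 : 0 < s := by linarith
  have hK0 : 0 < K := by linarith
  have hKn : K ^ n ≤ K ^ (n + 1) := pow_le_pow_right₀ hK (by omega)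
  apply interp (by positivity) hs0 (by linarith) h0 h1
  · rcases le_total t 1 with h | h
    · refine b0.trans ?_
      rw [mul_assoc]
      apply le_mul_of_one_le_right hD
      rw [← div_eq_mul_inv, one_le_div (by positivity)]
      exact (pow_le_pow_left₀ hs0.le (by linarith) n).trans hKn
    · refine b1.trans ?_
      rw [mul_assoc]
      gcongr
      rw [← div_eq_mul_inv, inv_eq_one_div, div_le_div_iff₀ (by positivity) (by positivity)]
      have : s ^ n ≤ (K * t) ^ n := pow_le_pow_left₀ hs0.le (by nlinarith) n
      rw [mul_pow] at this
      have h2 : K ^ n * t ^ n ≤ K ^ (n + 1) * t ^ n := by gcongr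
      linarith
  · have e : D * K ^ (n + 1) * (s ^ n)⁻¹ * (R / s) = D * (R * (K ^ (n + 1) / s ^ (n + 1))) := by
      field_simp
      ring
    rw [e]
    rcases le_total t 1 with h | h
    · refine b0.trans ?_
      apply le_mul_of_one_le_right hD
      apply one_le_mul_of_one_le_of_one_le hR
      rw [one_le_div (by positivity)]
      exact pow_le_pow_left₀ hs0.le (by linarith) _
    · refine b2.trans ?_
      have e2 : D * (t ^ n)⁻¹ * (R / t) = D * (R * (1 / t ^ (n + 1))) := by
        field_simp
        ring
      rw [e2]
      have : s ^ (n + 1) ≤ (K * t) ^ (n + 1) := pow_le_pow_left₀ hs0.le (by nlinarith) _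
      rw [mul_pow] at this
      have h3 : 1 / t ^ (n + 1) ≤ K ^ (n + 1) / s ^ (n + 1) := by
        rw [div_le_div_iff₀ (by positivity) (by positivity)]
        linarith
      gcongr

/-- **Lemma (atoms at distance `|j|`).**
For a fixed admissible `φ` there is `C = C(n,φ)` such that: for every `j ∈ ℤ^n`
with `|j| > 2` and every measurable `a` with `|a| ≤ 1` a.e., `∫ a = 0`, supported
in `Q_0 ∪ Q_j`, one has `‖𝓜_φ a‖_{L^1} ≤ C (1 + ln|j|)`. -/
theorem far_atom_estimate (n : ℕ) (hn : 1 ≤ n) (φ : En n → ℝ) (hφ : IsTestFun n φ) :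
    ∃ C : ℝ, ∀ j : Fin n → ℤ, 2 < ‖zv n j‖ →
      ∀ a : En n → ℝ, Measurable a →
        (∀ᵐ x ∂(volume : Measure (En n)), |a x| ≤ 1) →
        (∫ x, a x) = 0 →
        (∀ x, x ∉ Qk n 0 ∪ Qk n j → a x = 0) →
        ∫⁻ x, ENNReal.ofReal (Mphi n φ a x) ≤
          ENNReal.ofReal (C * (1 + Real.log ‖zv n j‖)) := by
  obtain ⟨W, hW0, hW⟩ := intAux n hn
  obtain ⟨D, hD, hb⟩ := conv_bound n φ hφ
  set K := 2 + √(n : ℝ) with hKdef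
  have hK : 1 ≤ K := by have := Real.sqrt_nonneg (n : ℝ); linarith
  refine ⟨2 * (D * K ^ (n + 1) * Real.exp 1) * W, ?_⟩
  intro j hj a ham ha1 ha0 has
  have hb := hb j hj a ham ha1 ha0 has
  set z := zv n j with hz
  have hl : 0 ≤ Real.log ‖z‖ := Real.log_nonneg (by linarith)
  set ε := (1 + Real.log ‖z‖)⁻¹ with hε
  have hε0 : 0 < ε := by positivity
  have hε1 : ε ≤ 1 := inv_le_one_of_one_le₀ (by linarith)
  have hRε : ‖z‖ ^ ε ≤ Real.exp 1 := by
    rw [Real.rpow_def_of_pos (by linarith)]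
    apply Real.exp_le_exp.2
    rw [hε, ← div_eq_mul_inv, div_le_one (by positivity)]
    linarith
  obtain ⟨hI, hIW⟩ := hW ε hε0
  set G : En n → ℝ := fun x => (1 + ‖x‖) ^ (-((n : ℝ) + ε)) with hG
  have hG0 : ∀ x, 0 ≤ G x := fun x => by positivity
  set B := D * K ^ (n + 1) * Real.exp 1 with hB
  have hB0 : 0 ≤ B := by positivity
  have main : ∀ x, Mphi n φ a x ≤ B * (G x + G (x - z)) := by
    intro x
    apply Real.iSup_le _ (mul_nonneg hB0 (add_nonneg (hG0 _) (hG0 _)))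
    rintro ⟨t, ht⟩
    obtain ⟨b0, b1, b2, b3⟩ := hb t ht x
    have aux : ∀ w : En n, ‖w‖ ≤ t + √(n : ℝ) → |phiConv n φ a t x| ≤ B * G w := by
      intro w hw
      have := scalar_bound (s := 1 + ‖w‖) (K := K) hD hK ht (by linarith [norm_nonneg w])
        (by linarith) (by linarith : 1 ≤ ‖z‖) hε0 hε1 b0 b1 b2
      refine this.trans ?_
      rw [hB]
      have := hG0 w
      gcongr
    rcases b3 with h | h | h
    · simp only [h, abs_zero]
      exact mul_nonneg hB0 (add_nonneg (hG0 _) (hG0 _))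
    · refine (aux _ h).trans ?_
      gcongr
      linarith [hG0 (x - z)]
    · refine (aux _ h).trans ?_
      gcongr
      linarith [hG0 x]
  have hI2 : Integrable (fun x => G (x - z)) := hI.comp_sub_right z
  have hI3 : Integrable (fun x => B * (G x + G (x - z))) := (hI.add hI2).const_mul B
  calc ∫⁻ x, ENNReal.ofReal (Mphi n φ a x)
      ≤ ∫⁻ x, ENNReal.ofReal (B * (G x + G (x - z))) :=
        lintegral_mono fun x => ENNReal.ofReal_le_ofReal (main x)
    _ = ENNReal.ofReal (∫ x, B * (G x + G (x - z))) :=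
        (ofReal_integral_eq_lintegral_ofReal hI3 (Filter.Eventually.of_forall fun x =>
          mul_nonneg hB0 (add_nonneg (hG0 _) (hG0 _)))).symm
    _ ≤ _ := by
      apply ENNReal.ofReal_le_ofReal
      rw [integral_const_mul, integral_add hI hI2, integral_sub_right_eq_self G z]
      have h5 : W / ε = W * (1 + Real.log ‖z‖) := by rw [hε, div_inv_eq_mul]
      rw [h5] at hIW
      have := mul_le_mul_of_nonneg_left hIW hB0
      nlinarith
end
end

section
/- Let n ≥ 1 and let f be an integrable function on ℝ^n such that ∫_{ℝ^n} |f(x)| ( 1 + ln₊ ln(e+|f(x)|) + ln₊ ln(e+|x|) ) dx < ∞. Then T_θ f = f − (∫ f dx)·θ belongs to H_log(ℝ^n); that is, for every smooth φ supported in the closed unit ball with ∫φ = 1 one has ∫_{ℝ^n} Ψ(x, 𝓜_φ(T_θ f)(x)) dx < ∞. -/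
open MeasureTheory Real Set Metric ENNReal

noncomputable section

/-- The Musielak function `Ψ(x,t) = t / (ln(e+t) + ln(e+|x|))` defining `L_log`. -/
def Psi (n : ℕ) (x : En n) (t : ℝ) : ℝ :=
  t / (Real.log (Real.exp 1 + t) + Real.log (Real.exp 1 + ‖x‖))

lemma gs_log1 {v : ℝ} (hv : 0 ≤ v) : 1 ≤ Real.log (Real.exp 1 + v) := by
  rw [Real.le_log_iff_exp_le (by positivity)]; linarith

lemma gs_lnp_log {v : ℝ} (hv : 0 ≤ v) :
    lnp (Real.log (Real.exp 1 + v)) = Real.log (Real.log (Real.exp 1 + v)) := by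
  unfold lnp
  exact max_eq_left (Real.log_nonneg (gs_log1 hv))

lemma gs_lnp_nonneg (v : ℝ) : 0 ≤ lnp v := le_max_right _ _

lemma gs_scale {l v : ℝ} (hl : 1 ≤ l) (hv : 0 ≤ v) :
    1 + lnp (Real.log (Real.exp 1 + l * v)) ≤
      (1 + Real.log (1 + Real.log l)) * (1 + lnp (Real.log (Real.exp 1 + v))) := by
  have h1 := gs_log1 hv
  have hl0 : 0 ≤ Real.log l := Real.log_nonneg hl
  have hA : 0 ≤ Real.log (1 + Real.log l) := Real.log_nonneg (by linarith)
  have hB := Real.log_nonneg h1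
  rw [gs_lnp_log hv, gs_lnp_log (by positivity)]
  have he := Real.exp_pos 1
  have h2 : Real.log (Real.exp 1 + l * v) ≤ Real.log l + Real.log (Real.exp 1 + v) := by
    rw [← Real.log_mul (by positivity) (by positivity)]
    apply Real.log_le_log (by positivity)
    nlinarith
  have h3 : Real.log (Real.exp 1 + l * v) ≤ (1 + Real.log l) * Real.log (Real.exp 1 + v) := by
    nlinarith
  have h4 : Real.log (Real.log (Real.exp 1 + l * v)) ≤
      Real.log (1 + Real.log l) + Real.log (Real.log (Real.exp 1 + v)) := by
    rw [← Real.log_mul (by positivity) (by positivity)]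
    apply Real.log_le_log _ h3
    have := gs_log1 (v := l * v) (by positivity)
    linarith
  nlinarith

lemma gs_harm {v : ℝ} (hv : 0 ≤ v) :
    ∑' k : ℕ, ENNReal.ofReal (min 1 (v / 2 ^ k) / (k + 1)) ≤
      ENNReal.ofReal (5 * (1 + lnp (Real.log (Real.exp 1 + v)))) := by
  have h1 := gs_log1 hv
  set Lv := Real.log (Real.exp 1 + v) with hLv
  have he := Real.exp_pos 1
  obtain ⟨m, hm1, hm2⟩ : ∃ m : ℕ, v ≤ 2 ^ m ∧ (m : ℝ) ≤ 3 * Lv := by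
    refine ⟨⌈2 * Lv⌉₊, ?_, ?_⟩
    · have h2 : 2 * Lv ≤ (⌈2 * Lv⌉₊ : ℝ) := Nat.le_ceil _
      have h3 : Real.log (Real.exp 1 + v) ≤ Real.log ((2:ℝ) ^ ⌈2 * Lv⌉₊) := by
        rw [Real.log_pow, ← hLv]
        have := Real.log_two_gt_d9
        nlinarith
      have := (Real.log_le_log_iff (by positivity) (by positivity)).1 h3
      linarith
    · have := Nat.ceil_lt_add_one (a := 2 * Lv) (by linarith)
      linarith
  rw [← ENNReal.summable.sum_add_tsum_nat_add' (k := m)]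
  have hA : ∑ k ∈ Finset.range m, ENNReal.ofReal (min 1 (v / 2 ^ k) / (k + 1)) ≤
      ENNReal.ofReal (1 + Real.log (3 * Lv)) := by
    rw [← ENNReal.ofReal_sum_of_nonneg (fun i _ => by positivity)]
    apply ENNReal.ofReal_le_ofReal
    have hh : (∑ k ∈ Finset.range m, min 1 (v / 2 ^ k) / ((k:ℝ) + 1)) ≤ (harmonic m : ℝ) := by
      unfold harmonic
      push_cast
      apply Finset.sum_le_sum
      intro i _
      rw [div_eq_mul_inv]
      have : min 1 (v / 2 ^ i) ≤ 1 := min_le_left _ _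
      have h0 : (0:ℝ) ≤ ((i:ℝ) + 1)⁻¹ := by positivity
      nlinarith
    have h2 := harmonic_le_one_add_log m
    have h3 : Real.log m ≤ Real.log (3 * Lv) := by
      rcases Nat.eq_zero_or_pos m with h | h
      · subst h; simp; apply Real.log_nonneg; linarith
      · exact Real.log_le_log (by exact_mod_cast h) hm2
    linarith
  have hB : ∑' k : ℕ, ENNReal.ofReal (min 1 (v / 2 ^ (k + m)) / ((k + m : ℕ) + 1)) ≤
      ENNReal.ofReal 2 := by
    have : ∀ k : ℕ, ENNReal.ofReal (min 1 (v / 2 ^ (k + m)) / ((k + m : ℕ) + 1)) ≤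
        ENNReal.ofReal ((1/2 : ℝ) ^ k) := by
      intro k
      apply ENNReal.ofReal_le_ofReal
      have h0 : 0 ≤ v / 2 ^ (k + m) := by positivity
      calc min 1 (v / 2 ^ (k + m)) / (((k + m : ℕ) : ℝ) + 1) ≤ (v / 2 ^ (k + m)) / 1 := by
            apply div_le_div₀ h0 (min_le_right _ _) one_pos
            have : (0:ℝ) ≤ ((k + m : ℕ) : ℝ) := Nat.cast_nonneg _
            linarith
        _ ≤ (1/2 : ℝ) ^ k := by
            rw [div_one, div_le_iff₀ (by positivity), pow_add, ← mul_assoc, ← mul_pow]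
            simpa using hm1
    refine (ENNReal.tsum_le_tsum this).trans ?_
    rw [← ENNReal.ofReal_tsum_of_nonneg (fun k => by positivity)
      (summable_geometric_of_lt_one (by norm_num) (by norm_num)), tsum_geometric_two]
  refine (add_le_add hA hB).trans ?_
  have hLL := Real.log_nonneg h1
  have h3 : Real.log (3 * Lv) = Real.log 3 + Real.log Lv :=
    Real.log_mul (by norm_num) (by linarith)
  have h33 : 0 ≤ Real.log 3 := Real.log_nonneg (by norm_num)
  have h34 : Real.log 3 ≤ 2 := by
    have := Real.log_le_sub_one_of_pos (x := 3) (by norm_num); linarith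
  rw [← ENNReal.ofReal_add (by linarith) (by norm_num)]
  apply ENNReal.ofReal_le_ofReal
  rw [hLv, gs_lnp_log hv, ← hLv]
  linarith

lemma gs_phi {n : ℕ} {φ : En n → ℝ} (h : IsTestFun n φ) :
    ∃ C : ℝ, 1 ≤ C ∧ (∀ z, |φ z| ≤ C) ∧ ∀ z w, |φ z - φ w| ≤ C * ‖z - w‖ := by
  obtain ⟨hs, hsupp, -⟩ := h
  have hc : HasCompactSupport φ :=
    HasCompactSupport.intro (isCompact_closedBall (0 : En n) 1) hsupp
  obtain ⟨C1, hC1⟩ := hs.continuous.bounded_above_of_compact_support hc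
  obtain ⟨C2, hC2⟩ := ContDiff.lipschitzWith_of_hasCompactSupport hc hs (by simp)
  refine ⟨max 1 (max C1 C2), le_max_left _ _, fun z => ?_, fun z w => ?_⟩
  · exact (hC1 z).trans ((le_max_left _ _).trans (le_max_right _ _))
  · have := hC2.dist_le_mul z w
    rw [dist_eq_norm, dist_eq_norm, Real.norm_eq_abs] at this
    refine this.trans ?_
    gcongr
    exact (le_max_right _ _).trans (le_max_right _ _)

lemma gs_small {n : ℕ} {φ g : En n → ℝ} (h : IsTestFun n φ) {C : ℝ}
    (hC : ∀ z, |φ z| ≤ C) {t s : ℝ} (ht : 0 < t) (x : En n)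
    (hs : s < |phiConv n φ g t x|) :
    ENNReal.ofReal (s * t ^ n) ≤
      ENNReal.ofReal C * ∫⁻ y in closedBall x t, ENNReal.ofReal |g y| := by
  have htn : 0 < t ^ n := by positivity
  have h1 : ENNReal.ofReal |phiConv n φ g t x| ≤
      ∫⁻ y, ENNReal.ofReal |(t ^ n)⁻¹ * φ (t⁻¹ • (x - y)) * g y| := by
    unfold phiConv
    have := enorm_integral_le_lintegral_enorm (μ := volume)
      (fun y => (t ^ n)⁻¹ * φ (t⁻¹ • (x - y)) * g y)
    simpa only [Real.enorm_eq_ofReal_abs] using this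
  have h2 : ∫⁻ y, ENNReal.ofReal |(t ^ n)⁻¹ * φ (t⁻¹ • (x - y)) * g y| ≤
      ∫⁻ y, (closedBall x t).indicator
        (fun y => ENNReal.ofReal ((t ^ n)⁻¹ * C) * ENNReal.ofReal |g y|) y := by
    apply lintegral_mono
    intro y
    by_cases hy : y ∈ closedBall x t
    · simp only [indicator_of_mem hy]
      have hC0 : 0 ≤ C := (abs_nonneg _).trans (hC 0)
      rw [← ENNReal.ofReal_mul (by positivity)]
      apply ENNReal.ofReal_le_ofReal
      rw [abs_mul, abs_mul, abs_of_pos (inv_pos.2 htn)]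
      gcongr
      exact hC _
    · have : φ (t⁻¹ • (x - y)) = 0 := by
        apply h.2.1
        intro hz
        apply hy
        rw [mem_closedBall_zero_iff, norm_smul, norm_inv, Real.norm_of_nonneg ht.le,
          inv_mul_le_iff₀ ht, mul_one] at hz
        rwa [mem_closedBall, dist_comm, dist_eq_norm]
      simp [this]
  rw [lintegral_indicator measurableSet_closedBall, lintegral_const_mul' _ _ (by simp)] at h2
  calc ENNReal.ofReal (s * t ^ n) ≤ ENNReal.ofReal (t ^ n * |phiConv n φ g t x|) := by
        apply ENNReal.ofReal_le_ofReal; nlinarith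
    _ = ENNReal.ofReal (t ^ n) * ENNReal.ofReal |phiConv n φ g t x| :=
        ENNReal.ofReal_mul htn.le
    _ ≤ ENNReal.ofReal (t ^ n) * (ENNReal.ofReal ((t ^ n)⁻¹ * C) *
          ∫⁻ y in closedBall x t, ENNReal.ofReal |g y|) := by
        gcongr; exact h1.trans h2
    _ = _ := by
        rw [← mul_assoc, ← ENNReal.ofReal_mul htn.le, mul_inv_cancel_left₀ htn.ne']

lemma gs_large {n : ℕ} {φ g : En n → ℝ} (h : IsTestFun n φ) (hg : Integrable g)
    (hg0 : ∫ y, g y = 0) {C : ℝ}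
    (hC : ∀ z, |φ z| ≤ C) (hC2 : ∀ z w, |φ z - φ w| ≤ C * ‖z - w‖) {t : ℝ} (x : En n)
    (ht : (1 + ‖x‖) / 20 ≤ t) :
    ENNReal.ofReal |phiConv n φ g t x| ≤ ENNReal.ofReal (2 * C * 20 ^ (n + 1)) *
      ∫⁻ y, ENNReal.ofReal |g y| *
        ENNReal.ofReal (((1 + ‖x‖) ^ n)⁻¹ * min 1 (‖y‖ / (1 + ‖x‖))) := by
  have hr : 0 < 1 + ‖x‖ := by positivity
  have ht0 : 0 < t := lt_of_lt_of_le (by positivity) ht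
  have htn : 0 < t ^ n := by positivity
  have hC0 : 0 ≤ C := (abs_nonneg _).trans (hC 0)
  have heq : phiConv n φ g t x =
      ∫ y, (t ^ n)⁻¹ * (φ (t⁻¹ • (x - y)) - φ (t⁻¹ • x)) * g y := by
    have hcont := h.1.continuous
    have i1 : Integrable (fun y => (t ^ n)⁻¹ * φ (t⁻¹ • (x - y)) * g y) := by
      apply hg.bdd_mul (c := (t ^ n)⁻¹ * C)
      · apply Continuous.aestronglyMeasurable; fun_prop
      · filter_upwards with y
        rw [norm_mul, Real.norm_of_nonneg (inv_pos.2 htn).le]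
        gcongr
        exact hC _
    have i2 : Integrable (fun y => ((t ^ n)⁻¹ * φ (t⁻¹ • x)) * g y) := hg.const_mul _
    have : ∫ y, ((t ^ n)⁻¹ * φ (t⁻¹ • x)) * g y = 0 := by
      rw [integral_const_mul, hg0, mul_zero]
    unfold phiConv
    rw [← sub_zero (∫ y, (t ^ n)⁻¹ * φ (t⁻¹ • (x - y)) * g y), ← this, ← integral_sub i1 i2]
    congr 1; ext y; ring
  have h1 : ENNReal.ofReal |phiConv n φ g t x| ≤
      ∫⁻ y, ENNReal.ofReal |(t ^ n)⁻¹ * (φ (t⁻¹ • (x - y)) - φ (t⁻¹ • x)) * g y| := by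
    rw [heq]
    have := enorm_integral_le_lintegral_enorm (μ := volume)
      (fun y => (t ^ n)⁻¹ * (φ (t⁻¹ • (x - y)) - φ (t⁻¹ • x)) * g y)
    simpa only [Real.enorm_eq_ofReal_abs] using this
  refine h1.trans ?_
  rw [← lintegral_const_mul' _ _ (by simp)]
  apply lintegral_mono
  intro y
  simp only
  rw [← ENNReal.ofReal_mul (abs_nonneg _), ← ENNReal.ofReal_mul (by positivity)]
  apply ENNReal.ofReal_le_ofReal
  rw [abs_mul, abs_mul, abs_of_pos (inv_pos.2 htn)]
  have hinv : t⁻¹ ≤ 20 * (1 + ‖x‖)⁻¹ := by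
    rw [inv_le_comm₀ ht0 (by positivity)]
    refine le_trans (le_of_eq ?_) ht
    field_simp
  have k1 : (t ^ n)⁻¹ ≤ 20 ^ n * ((1 + ‖x‖) ^ n)⁻¹ := by
    rw [← inv_pow, ← inv_pow, ← mul_pow]
    gcongr
  have k2 : |φ (t⁻¹ • (x - y)) - φ (t⁻¹ • x)| ≤ 2 * C * 20 * min 1 (‖y‖ / (1 + ‖x‖)) := by
    rw [mul_min_of_nonneg _ _ (by positivity)]
    apply le_min
    · have a := hC (t⁻¹ • (x - y)); have b := hC (t⁻¹ • x)
      rw [abs_le] at a b ⊢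
      constructor <;> linarith [a.1, a.2, b.1, b.2]
    · refine (hC2 _ _).trans ?_
      have : t⁻¹ • (x - y) - t⁻¹ • x = -(t⁻¹ • y) := by rw [smul_sub]; abel
      rw [this, norm_neg, norm_smul, norm_inv, Real.norm_of_nonneg ht0.le]
      have : t⁻¹ * ‖y‖ ≤ 20 * (1 + ‖x‖)⁻¹ * ‖y‖ := by gcongr
      have h3 : 0 ≤ C * (20 * (1 + ‖x‖)⁻¹ * ‖y‖) := by positivity
      calc C * (t⁻¹ * ‖y‖) ≤ C * (20 * (1 + ‖x‖)⁻¹ * ‖y‖) := by gcongr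
        _ ≤ 2 * (C * (20 * (1 + ‖x‖)⁻¹ * ‖y‖)) := by linarith
        _ = _ := by ring
  calc (t ^ n)⁻¹ * |φ (t⁻¹ • (x - y)) - φ (t⁻¹ • x)| * |g y|
      ≤ (20 ^ n * ((1 + ‖x‖) ^ n)⁻¹) * (2 * C * 20 * min 1 (‖y‖ / (1 + ‖x‖))) * |g y| := by
        gcongr
    _ = _ := by ring

lemma gs_vitali {n : ℕ} (hn : 1 ≤ n) {H : En n → ℝ≥0∞} (hHm : Measurable H)
    (hH : ∫⁻ y, H y < ⊤) {κ : ℝ} (hκ : 0 < κ) {ω ω' : En n → ℝ≥0∞} {K : ℝ≥0∞}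
    (hω'm : Measurable ω')
    (hω : ∀ z y, 1 + ‖z‖ ≤ 2 * (1 + ‖y‖) → 1 + ‖y‖ ≤ 2 * (1 + ‖z‖) → ω z ≤ K * ω' y)
    (S : Set (En n))
    (hS : ∀ x ∈ S, ∃ t : ℝ, 0 < t ∧ t ≤ (1 + ‖x‖) / 20 ∧
      ENNReal.ofReal (κ * t ^ n) ≤ ∫⁻ y in closedBall x t, H y) :
    ∃ U : Set (En n), MeasurableSet U ∧ S ⊆ U ∧
      ∫⁻ x in U, ω x ≤ K * ENNReal.ofReal (5 ^ n / κ) * volume (closedBall (0 : En n) 1) *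
        ∫⁻ y, H y * ω' y := by
  choose! t ht0 ht1 ht2 using hS
  obtain ⟨u, huS, hdisj, hcov⟩ := Vitali.exists_disjoint_subfamily_covering_enlargement_closedBall
    S (fun x => x) t (1 + (∫⁻ y, H y).toReal / κ) (by
      intro x hx
      have h1 : ENNReal.ofReal (κ * t x ^ n) ≤ ∫⁻ y, H y :=
        (ht2 x hx).trans (setLIntegral_le_lintegral _ _)
      have h2 : κ * t x ^ n ≤ (∫⁻ y, H y).toReal :=
        (ENNReal.ofReal_le_iff_le_toReal hH.ne).1 h1
      have h3 : t x ^ n ≤ (∫⁻ y, H y).toReal / κ := by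
        rw [le_div_iff₀ hκ]; linarith
      by_cases h4 : t x ≤ 1
      · have : 0 ≤ (∫⁻ y, H y).toReal / κ := by positivity
        linarith
      · have := le_self_pow₀ (le_of_not_ge h4) (by omega : n ≠ 0)
        linarith) 5 (by norm_num)
  have hucount : u.Countable := hdisj.countable_of_nonempty_interior (fun x hx => by
    refine ⟨x, ?_⟩
    exact ball_subset_interior_closedBall (mem_ball_self (ht0 x (huS hx))))
  have : Countable u := hucount.to_subtype
  refine ⟨⋃ x : u, closedBall x.1 (5 * t x.1), MeasurableSet.iUnion fun _ =>
    measurableSet_closedBall, ?_, ?_⟩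
  · intro x hx
    obtain ⟨b, hb, hsub⟩ := hcov x hx
    exact mem_iUnion.2 ⟨⟨b, hb⟩, hsub (mem_closedBall_self (ht0 x hx).le)⟩
  set V := volume (closedBall (0 : En n) 1) with hV
  have key : ∀ x : u, ∫⁻ z in closedBall x.1 (5 * t x.1), ω z ≤
      K * ENNReal.ofReal (5 ^ n / κ) * V * ∫⁻ y in closedBall x.1 (t x.1), H y * ω' y := by
    rintro ⟨x, hx⟩
    have hxS := huS hx
    simp only
    have tp := ht0 x hxS
    have tpn : 0 < t x ^ n := by positivity
    have tle := ht1 x hxS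
    set I := ∫⁻ z in closedBall x (5 * t x), ω z with hI
    have hvol : volume (closedBall x (5 * t x)) = ENNReal.ofReal (5 ^ n * t x ^ n) * V := by
      rw [Measure.addHaar_closedBall' _ _ (by positivity), finrank_euclideanSpace,
        Fintype.card_fin, mul_pow]
    have h1 : I * ENNReal.ofReal (κ * t x ^ n) ≤
        (K * (ENNReal.ofReal (5 ^ n * t x ^ n) * V)) *
          ∫⁻ y in closedBall x (t x), H y * ω' y := by
      calc I * ENNReal.ofReal (κ * t x ^ n) ≤ I * ∫⁻ y in closedBall x (t x), H y := by
            gcongr; exact ht2 x hxS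
        _ = ∫⁻ y in closedBall x (t x), I * H y := by
            rw [lintegral_const_mul _ hHm]
        _ ≤ ∫⁻ y in closedBall x (t x),
              (K * (ENNReal.ofReal (5 ^ n * t x ^ n) * V)) * (H y * ω' y) := by
            apply setLIntegral_mono' measurableSet_closedBall
            intro y hy
            have : I ≤ ∫⁻ z in closedBall x (5 * t x), K * ω' y := by
              apply setLIntegral_mono' measurableSet_closedBall
              intro z hz
              rw [mem_closedBall, dist_eq_norm] at hy hz
              have a1 := norm_sub_norm_le x y
              have a2 := norm_sub_norm_le y x
              have a3 := norm_sub_norm_le x z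
              have a4 := norm_sub_norm_le z x
              rw [norm_sub_rev] at a1 a3
              apply hω <;> linarith [norm_nonneg x]
            rw [setLIntegral_const, hvol] at this
            calc I * H y ≤ (K * ω' y * (ENNReal.ofReal (5 ^ n * t x ^ n) * V)) * H y := by
                  gcongr
              _ = _ := by ring
        _ ≤ _ := by
            rw [lintegral_const_mul _ (by fun_prop)]
    have h2 : ENNReal.ofReal (5 ^ n * t x ^ n) =
        ENNReal.ofReal (5 ^ n / κ) * ENNReal.ofReal (κ * t x ^ n) := by
      rw [← ENNReal.ofReal_mul (by positivity)]
      congr 1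
      field_simp
    have h3 : I * ENNReal.ofReal (κ * t x ^ n) ≤
        (K * ENNReal.ofReal (5 ^ n / κ) * V * ∫⁻ y in closedBall x (t x), H y * ω' y) *
          ENNReal.ofReal (κ * t x ^ n) := by
      refine h1.trans (le_of_eq ?_)
      rw [h2]; ring
    exact (ENNReal.mul_le_mul_iff_left (by simpa using by positivity) (by simp)).1 h3
  calc ∫⁻ x in ⋃ x : u, closedBall x.1 (5 * t x.1), ω x
      ≤ ∑' x : u, ∫⁻ z in closedBall x.1 (5 * t x.1), ω z := lintegral_iUnion_le _ _
    _ ≤ ∑' x : u, K * ENNReal.ofReal (5 ^ n / κ) * V *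
          ∫⁻ y in closedBall x.1 (t x.1), H y * ω' y := ENNReal.tsum_le_tsum key
    _ = K * ENNReal.ofReal (5 ^ n / κ) * V *
          ∫⁻ y in ⋃ x : u, closedBall x.1 (t x.1), H y * ω' y := by
        rw [ENNReal.tsum_mul_left, lintegral_iUnion (fun _ => measurableSet_closedBall)]
        intro a b hab
        exact hdisj a.2 b.2 (fun h => hab (Subtype.ext h))
    _ ≤ _ := by
        gcongr
        exact Measure.restrict_le_self

lemma gs_weak {n : ℕ} (hn : 1 ≤ n) {g : En n → ℝ} (hgm : Measurable g)
    (hg : Integrable g) {C : ℝ} (hC : 1 ≤ C) :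
    ∃ B c : ℝ, 0 < B ∧ 0 < c ∧ ∀ s : ℝ, 0 < s → ∀ ω ω' : En n → ℝ≥0∞, ∀ K : ℝ≥0∞,
      Measurable ω' →
      (∀ z y, 1 + ‖z‖ ≤ 2 * (1 + ‖y‖) → 1 + ‖y‖ ≤ 2 * (1 + ‖z‖) → ω z ≤ K * ω' y) →
      ∃ U : Set (En n), MeasurableSet U ∧
        (∀ x t, 0 < t → t ≤ (1 + ‖x‖) / 20 → ENNReal.ofReal (s * t ^ n) ≤
          ENNReal.ofReal C * ∫⁻ y in closedBall x t, ENNReal.ofReal |g y| → x ∈ U) ∧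
        ∫⁻ x in U, ω x ≤ K * ENNReal.ofReal (B / s) *
          ∫⁻ y, ({y | c * s < |g y|}.indicator (fun y => ENNReal.ofReal |g y|) y) * ω' y := by
  set V := volume (closedBall (0 : En n) 1) with hV
  have hVtop : V ≠ ⊤ := measure_closedBall_lt_top.ne
  have hV0 : V ≠ 0 := (measure_closedBall_pos volume _ one_pos).ne'
  set v := V.toReal with hv
  have hVv : V = ENNReal.ofReal v := (ENNReal.ofReal_toReal hVtop).symm
  have hv0 : 0 < v := ENNReal.toReal_pos hV0 hVtop
  have hC0 : 0 < C := by linarith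
  refine ⟨5 ^ n * (2 * C) * v, 1 / (2 * C * v), by positivity, by positivity, ?_⟩
  intro s hs ω ω' K hω'm hω
  set c := 1 / (2 * C * v) with hc
  have hc0 : 0 < c := by positivity
  have hms : MeasurableSet {y | c * s < |g y|} :=
    measurableSet_lt measurable_const (by fun_prop)
  have hmG : Measurable (fun y => ENNReal.ofReal |g y|) := by fun_prop
  have hmH : Measurable ({y | c * s < |g y|}.indicator (fun y => ENNReal.ofReal |g y|)) :=
    hmG.indicator hms
  have hfin : ∫⁻ y, {y | c * s < |g y|}.indicator (fun y => ENNReal.ofReal |g y|) y < ⊤ := by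
    refine lt_of_le_of_lt (lintegral_mono (indicator_le_self _ _)) ?_
    have := hg.2
    rw [HasFiniteIntegral] at this
    simpa only [Real.enorm_eq_ofReal_abs] using this
  obtain ⟨U, hUm, hSU, hU⟩ := gs_vitali hn hmH hfin (κ := s / (2 * C)) (by positivity) hω'm hω
    {x | ∃ t, 0 < t ∧ t ≤ (1 + ‖x‖) / 20 ∧ ENNReal.ofReal (s * t ^ n) ≤
          ENNReal.ofReal C * ∫⁻ y in closedBall x t, ENNReal.ofReal |g y|} (by
      rintro x ⟨t, ht0, ht1, ht2⟩
      refine ⟨t, ht0, ht1, ?_⟩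
      set J := ∫⁻ y in closedBall x t,
        {y | c * s < |g y|}.indicator (fun y => ENNReal.ofReal |g y|) y with hJ
      have hsplit : ∫⁻ y in closedBall x t, ENNReal.ofReal |g y| ≤
          J + ENNReal.ofReal (c * s * t ^ n * v) := by
        calc ∫⁻ y in closedBall x t, ENNReal.ofReal |g y|
            ≤ ∫⁻ y in closedBall x t,
              ({y | c * s < |g y|}.indicator (fun y => ENNReal.ofReal |g y|) y
                + ENNReal.ofReal (c * s)) := by
              apply lintegral_mono
              intro y
              beta_reduce
              by_cases hy : c * s < |g y|
              · rw [indicator_of_mem (by exact hy)]; exact le_self_add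
              · rw [indicator_of_notMem (by exact hy), zero_add]
                exact ENNReal.ofReal_le_ofReal (not_lt.1 hy)
          _ = _ := by
              rw [lintegral_add_left hmH, setLIntegral_const,
                Measure.addHaar_closedBall' _ _ ht0.le, finrank_euclideanSpace,
                Fintype.card_fin, ← hV, hVv, ← ENNReal.ofReal_mul (by positivity),
                ← ENNReal.ofReal_mul (by positivity)]
              congr 2; ring
      have hJtop : J ≠ ⊤ :=
        (lt_of_le_of_lt (setLIntegral_le_lintegral _ _) hfin).ne
      rw [← ENNReal.ofReal_toReal hJtop] at hsplit ⊢
      apply ENNReal.ofReal_le_ofReal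
      have h3 : ENNReal.ofReal (s * t ^ n) ≤
          ENNReal.ofReal (C * (J.toReal + c * s * t ^ n * v)) := by
        refine ht2.trans ?_
        rw [ENNReal.ofReal_mul hC0.le, ENNReal.ofReal_add (by positivity) (by positivity)]
        gcongr
      rw [ENNReal.ofReal_le_ofReal_iff (by positivity)] at h3
      have h4 : C * (c * s * t ^ n * v) = s * t ^ n / 2 := by
        rw [hc]; field_simp
      rw [div_mul_eq_mul_div, div_le_iff₀ (by positivity)]
      nlinarith)
  refine ⟨U, hUm, fun x t h1 h2 h3 => hSU ⟨t, h1, h2, h3⟩, hU.trans (le_of_eq ?_)⟩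
  rw [← hV, hVv, mul_assoc K, ← ENNReal.ofReal_mul (by positivity)]
  congr 3
  field_simp

lemma gs_L_ge {k : ℕ} {r : ℝ} (hr : (2:ℝ) ^ k ≤ Real.exp 1 + r) (h0 : 0 ≤ r) :
    ((k:ℝ) + 1) / 3 ≤ Real.log (Real.exp 1 + r) := by
  have h1 := gs_log1 h0
  have h2 := Real.log_le_log (by positivity) hr
  rw [Real.log_pow] at h2
  have := Real.log_two_gt_d9
  rcases Nat.eq_zero_or_pos k with h | h
  · subst h; norm_num; linarith
  · have : (1:ℝ) ≤ k := by exact_mod_cast h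
    nlinarith

lemma gs_kernel (n : ℕ) : ∃ A : ℝ, 0 ≤ A ∧ ∀ y : En n,
    ∫⁻ x : En n, ENNReal.ofReal (((1 + ‖x‖) ^ n)⁻¹ * min 1 (‖y‖ / (1 + ‖x‖)) /
      Real.log (Real.exp 1 + ‖x‖)) ≤
      ENNReal.ofReal (A * (1 + lnp (Real.log (Real.exp 1 + ‖y‖)))) := by
  set V := volume (closedBall (0 : En n) 1) with hV
  have hVtop : V ≠ ⊤ := measure_closedBall_lt_top.ne
  set v := V.toReal with hv
  have hVv : V = ENNReal.ofReal v := (ENNReal.ofReal_toReal hVtop).symm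
  have hv0 : 0 ≤ v := ENNReal.toReal_nonneg
  refine ⟨3 * 2 ^ n * v * 5, by positivity, fun y => ?_⟩
  have hpt : ∀ x : En n, ENNReal.ofReal (((1 + ‖x‖) ^ n)⁻¹ * min 1 (‖y‖ / (1 + ‖x‖)) /
      Real.log (Real.exp 1 + ‖x‖)) ≤ ∑' k : ℕ, (closedBall (0 : En n) (2 ^ (k + 1))).indicator
        (fun _ => ENNReal.ofReal ((2 ^ (k * n))⁻¹ * (3 * (min 1 (‖y‖ / 2 ^ k) / (k + 1))))) x := by
    intro x
    obtain ⟨k, hk1, hk2⟩ := exists_nat_pow_near (x := 1 + ‖x‖) (y := 2)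
      (by linarith [norm_nonneg x]) (by norm_num)
    refine le_trans ?_ (ENNReal.le_tsum k)
    rw [indicator_of_mem (by rw [mem_closedBall_zero_iff]; linarith)]
    apply ENNReal.ofReal_le_ofReal
    have he : 1 ≤ Real.exp 1 := Real.one_le_exp (by norm_num)
    have hL := gs_L_ge (k := k) (r := ‖x‖) (by linarith) (norm_nonneg _)
    have hL0 : 0 < ((k:ℝ) + 1) / 3 := by positivity
    calc ((1 + ‖x‖) ^ n)⁻¹ * min 1 (‖y‖ / (1 + ‖x‖)) / Real.log (Real.exp 1 + ‖x‖)
        ≤ (((2:ℝ) ^ k) ^ n)⁻¹ * min 1 (‖y‖ / 2 ^ k) / (((k:ℝ) + 1) / 3) := by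
          gcongr
      _ = _ := by
          rw [pow_mul]; field_simp
  calc _ ≤ ∫⁻ x : En n, ∑' k : ℕ, (closedBall (0 : En n) (2 ^ (k + 1))).indicator
        (fun _ => ENNReal.ofReal ((2 ^ (k * n))⁻¹ * (3 * (min 1 (‖y‖ / 2 ^ k) / (k + 1))))) x :=
        lintegral_mono hpt
    _ = ∑' k : ℕ, ENNReal.ofReal ((2 ^ (k * n))⁻¹ * (3 * (min 1 (‖y‖ / 2 ^ k) / (k + 1)))) *
          volume (closedBall (0 : En n) (2 ^ (k + 1))) := by
        rw [lintegral_tsum (fun k => (measurable_const.indicator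
          measurableSet_closedBall).aemeasurable)]
        congr 1; ext k
        rw [lintegral_indicator_const measurableSet_closedBall]
    _ = ∑' k : ℕ, ENNReal.ofReal (3 * 2 ^ n * v) *
          ENNReal.ofReal (min 1 (‖y‖ / 2 ^ k) / (k + 1)) := by
        congr 1; ext k
        rw [Measure.addHaar_closedBall' _ _ (by positivity), finrank_euclideanSpace,
                Fintype.card_fin, ← hV, hVv, ← ENNReal.ofReal_mul (by positivity),
                ← ENNReal.ofReal_mul (by positivity), ← ENNReal.ofReal_mul (by positivity)]
        congr 1
        rw [← pow_mul, add_mul, one_mul, pow_add]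
        field_simp
    _ ≤ ENNReal.ofReal (3 * 2 ^ n * v) *
          ENNReal.ofReal (5 * (1 + lnp (Real.log (Real.exp 1 + ‖y‖)))) := by
        rw [ENNReal.tsum_mul_left]
        gcongr
        exact gs_harm (norm_nonneg _)
    _ = _ := by
        rw [← ENNReal.ofReal_mul (by positivity)]
        congr 1; ring

lemma gs_L2 {a b : ℝ} (ha : 0 ≤ a) (hb : 0 ≤ b) (h : 1 + a ≤ 2 * (1 + b)) :
    Real.log (Real.exp 1 + a) ≤ 2 * Real.log (Real.exp 1 + b) := by
  have he : 2 ≤ Real.exp 1 := by have := Real.add_one_le_exp 1; linarith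
  have : 2 * Real.log (Real.exp 1 + b) = Real.log ((Real.exp 1 + b) ^ 2) := by
    rw [Real.log_pow]; norm_num
  rw [this]
  apply Real.log_le_log (by positivity)
  nlinarith

lemma gs_high {n : ℕ} (hn : 1 ≤ n) {g : En n → ℝ} (hgm : Measurable g)
    (hg : Integrable g) {C : ℝ} (hC : 1 ≤ C)
    (hc1 : ∫⁻ y, ENNReal.ofReal (|g y| * (1 + lnp (Real.log (Real.exp 1 + |g y|)))) < ⊤) :
    ∃ U : ℕ → Set (En n), (∀ j, MeasurableSet (U j)) ∧
      (∀ j x t, 0 < t → t ≤ (1 + ‖x‖) / 20 → ENNReal.ofReal ((2 ^ j / 2) * t ^ n) ≤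
          ENNReal.ofReal C * ∫⁻ y in closedBall x t, ENNReal.ofReal |g y| → x ∈ U j) ∧
      ∫⁻ x, ∑' j : ℕ, (U j).indicator (fun _ => ENNReal.ofReal (2 ^ (j + 1) * 3 / (j + 1))) x
        < ⊤ := by
  obtain ⟨B, c, hB, hc, hweak⟩ := gs_weak hn hgm hg hC
  have := fun j : ℕ => hweak (2 ^ j / 2) (by positivity) (fun _ => 1) (fun _ => 1) 1
    measurable_const (fun _ _ _ _ => by simp)
  choose U hUm hU hUint using this
  refine ⟨U, hUm, hU, ?_⟩
  set l := 2 / c + 1 with hl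
  have hl1 : 1 ≤ l := by have : 0 < 2 / c := by positivity
                         linarith
  set Kl := 1 + Real.log (1 + Real.log l)
  have hKl : 0 ≤ Kl := by
    have : 0 ≤ Real.log l := Real.log_nonneg hl1
    have := Real.log_nonneg (x := 1 + Real.log l) (by linarith)
    positivity
  have hm : ∀ j : ℕ, Measurable ({y | c * (2 ^ j / 2) < |g y|}.indicator
      (fun y => ENNReal.ofReal |g y|)) := fun j =>
    Measurable.indicator (by fun_prop) (measurableSet_lt measurable_const (by fun_prop))
  calc ∫⁻ x, ∑' j : ℕ, (U j).indicator (fun _ => ENNReal.ofReal (2 ^ (j + 1) * 3 / (j + 1))) x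
      = ∑' j : ℕ, ENNReal.ofReal (2 ^ (j + 1) * 3 / (j + 1)) * ∫⁻ x in U j, 1 := by
        rw [lintegral_tsum (fun j => (measurable_const.indicator (hUm j)).aemeasurable)]
        congr 1; ext j
        rw [lintegral_indicator_const (hUm j), setLIntegral_one]
    _ ≤ ∑' j : ℕ, ENNReal.ofReal (12 * B) * ∫⁻ y, ENNReal.ofReal (1 / ((j:ℝ) + 1)) *
          ({y | c * (2 ^ j / 2) < |g y|}.indicator (fun y => ENNReal.ofReal |g y|) y) := by
        apply ENNReal.tsum_le_tsum
        intro j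
        rw [lintegral_const_mul _ (hm j), ← mul_assoc, ← ENNReal.ofReal_mul (by positivity)]
        have h1 := hUint j
        simp only [one_mul, mul_one] at h1
        refine (mul_le_mul' le_rfl h1).trans (le_of_eq ?_)
        rw [← mul_assoc, ← ENNReal.ofReal_mul (by positivity)]
        congr 2
        rw [pow_succ]
        field_simp
        ring
    _ = ENNReal.ofReal (12 * B) * ∫⁻ y, ∑' j : ℕ, ENNReal.ofReal (1 / ((j:ℝ) + 1)) *
          ({y | c * (2 ^ j / 2) < |g y|}.indicator (fun y => ENNReal.ofReal |g y|) y) := by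
        rw [ENNReal.tsum_mul_left, lintegral_tsum]
        intro j
        exact ((hm j).const_mul _).aemeasurable
    _ ≤ ENNReal.ofReal (12 * B) * ∫⁻ y, ENNReal.ofReal (5 * Kl) *
          ENNReal.ofReal (|g y| * (1 + lnp (Real.log (Real.exp 1 + |g y|)))) := by
        gcongr with y
        have h1 : ∀ j : ℕ, ENNReal.ofReal (1 / ((j:ℝ) + 1)) *
          ({y | c * (2 ^ j / 2) < |g y|}.indicator (fun y => ENNReal.ofReal |g y|) y) ≤
            ENNReal.ofReal |g y| * ENNReal.ofReal (min 1 (l * |g y| / 2 ^ j) / (j + 1)) := by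
          intro j
          by_cases hy : c * (2 ^ j / 2) < |g y|
          · rw [indicator_of_mem (by exact hy), mul_comm]
            gcongr
            apply le_min le_rfl
            rw [le_div_iff₀ (by positivity), one_mul]
            have : (2:ℝ) ^ j = (2 / c) * (c * (2 ^ j / 2)) := by field_simp
            rw [this, hl]
            have h0 : 0 < 2 / c := by positivity
            nlinarith [abs_nonneg (g y)]
          · rw [indicator_of_notMem (by exact hy)]; simp
        calc _ ≤ ∑' j : ℕ, ENNReal.ofReal |g y| *
                ENNReal.ofReal (min 1 (l * |g y| / 2 ^ j) / (j + 1)) := ENNReal.tsum_le_tsum h1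
          _ ≤ ENNReal.ofReal |g y| *
              ENNReal.ofReal (5 * (1 + lnp (Real.log (Real.exp 1 + l * |g y|)))) := by
              rw [ENNReal.tsum_mul_left]
              gcongr
              exact gs_harm (by positivity)
          _ ≤ _ := by
              rw [← ENNReal.ofReal_mul (abs_nonneg _), ← ENNReal.ofReal_mul (by positivity)]
              apply ENNReal.ofReal_le_ofReal
              have := gs_scale hl1 (abs_nonneg (g y))
              calc _ ≤ |g y| * (5 * (Kl * (1 + lnp (Real.log (Real.exp 1 + |g y|))))) := by
                    gcongr
                _ = _ := by ring
    _ < ⊤ := by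
        rw [lintegral_const_mul' _ _ ENNReal.ofReal_ne_top]
        exact ENNReal.mul_lt_top ENNReal.ofReal_lt_top (ENNReal.mul_lt_top ENNReal.ofReal_lt_top hc1)

lemma gs_count {X Lx : ℝ} (hX : 0 ≤ X) (hL : 0 < Lx) :
    ∑' j : ℕ, ENNReal.ofReal (if (j:ℝ) < X then 1 / Lx else 0) ≤
      ENNReal.ofReal ((X + 1) / Lx) := by
  rw [tsum_eq_sum (s := Finset.range ⌈X⌉₊)]
  · calc ∑ j ∈ Finset.range ⌈X⌉₊, ENNReal.ofReal (if (j:ℝ) < X then 1 / Lx else 0)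
        ≤ ∑ j ∈ Finset.range ⌈X⌉₊, ENNReal.ofReal (1 / Lx) := by
          apply Finset.sum_le_sum
          intro j _
          apply ENNReal.ofReal_le_ofReal
          split_ifs
          · exact le_rfl
          · positivity
      _ = ENNReal.ofReal (⌈X⌉₊ / Lx) := by
          rw [Finset.sum_const, Finset.card_range, nsmul_eq_mul, ← ENNReal.ofReal_natCast,
            ← ENNReal.ofReal_mul (by positivity), mul_one_div]
      _ ≤ _ := by
          apply ENNReal.ofReal_le_ofReal
          have := Nat.ceil_lt_add_one hX
          gcongr
  · intro j hj
    rw [Finset.mem_range, not_lt, Nat.ceil_le] at hj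
    simp [not_lt.2 hj]

lemma gs_low {n : ℕ} (hn : 1 ≤ n) {g : En n → ℝ} (hgm : Measurable g)
    (hg : Integrable g) {C : ℝ} (hC : 1 ≤ C) {D : ℝ} (hD : 0 ≤ D) :
    ∃ U : ℕ → Set (En n), (∀ j, MeasurableSet (U j)) ∧
      (∀ j x t, 0 < t → t ≤ (1 + ‖x‖) / 20 → ENNReal.ofReal ((1/2) ^ (j + 1) * t ^ n) ≤
          ENNReal.ofReal C * ∫⁻ y in closedBall x t, ENNReal.ofReal |g y| → x ∈ U j) ∧
      ∫⁻ x, ∑' j : ℕ, (U j).indicator (fun x => ENNReal.ofReal ((1/2) ^ j) *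
        ENNReal.ofReal (if (j:ℝ) < D * Real.log (Real.exp 1 + ‖x‖) then
          1 / Real.log (Real.exp 1 + ‖x‖) else 0)) x < ⊤ := by
  obtain ⟨B, c, hB, hc, hweak⟩ := gs_weak hn hgm hg hC
  set w : ℝ → ℕ → En n → ℝ≥0∞ := fun D j x =>
    ENNReal.ofReal (if (j:ℝ) < D * Real.log (Real.exp 1 + ‖x‖) then
          1 / Real.log (Real.exp 1 + ‖x‖) else 0) with hw
  have hwm : ∀ D j, Measurable (w D j) := by
    intro D j
    apply Measurable.ennreal_ofReal
    apply Measurable.ite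
    · exact measurableSet_lt measurable_const (by fun_prop)
    · fun_prop
    · fun_prop
  have := fun j : ℕ => hweak ((1/2) ^ (j + 1)) (by positivity) (w D j) (w (2 * D) j)
    (ENNReal.ofReal 2) (hwm _ _) (fun z y h1 h2 => by
      have a1 := gs_L2 (norm_nonneg z) (norm_nonneg y) h1
      have a2 := gs_L2 (norm_nonneg y) (norm_nonneg z) h2
      have b1 := gs_log1 (norm_nonneg z)
      have b2 := gs_log1 (norm_nonneg y)
      simp only [hw]
      rw [← ENNReal.ofReal_mul (by norm_num)]
      apply ENNReal.ofReal_le_ofReal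
      by_cases hj : (j:ℝ) < D * Real.log (Real.exp 1 + ‖z‖)
      · have hj' : (j:ℝ) < 2 * D * Real.log (Real.exp 1 + ‖y‖) := by nlinarith
        rw [if_pos hj, if_pos hj', mul_one_div, div_le_div_iff₀ (by linarith) (by linarith)]
        linarith
      · rw [if_neg hj]
        split_ifs <;> positivity)
  choose U hUm hU hUint using this
  refine ⟨U, hUm, hU, ?_⟩
  have hgG : ∫⁻ y, ENNReal.ofReal |g y| < ⊤ := by
    have := hg.2
    rw [HasFiniteIntegral] at this
    simpa only [Real.enorm_eq_ofReal_abs] using this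
  calc _ = ∑' j : ℕ, ENNReal.ofReal ((1/2) ^ j) * ∫⁻ x in U j, w D j x := by
        rw [lintegral_tsum (fun j => (((hwm D j).const_mul _).indicator (hUm j)).aemeasurable)]
        congr 1; ext j
        rw [lintegral_indicator (hUm j), lintegral_const_mul _ (hwm D j)]
    _ ≤ ∑' j : ℕ, ENNReal.ofReal (4 * B) * ∫⁻ y, ENNReal.ofReal |g y| * w (2 * D) j y := by
        apply ENNReal.tsum_le_tsum
        intro j
        calc ENNReal.ofReal ((1/2) ^ j) * ∫⁻ x in U j, w D j x
            ≤ ENNReal.ofReal ((1/2) ^ j) * (ENNReal.ofReal 2 *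
                ENNReal.ofReal (B / (1/2) ^ (j + 1)) *
                ∫⁻ y, ENNReal.ofReal |g y| * w (2 * D) j y) := by
              gcongr
              refine (hUint j).trans ?_
              gcongr
              exact indicator_le_self _ _ _
          _ = _ := by
              rw [← mul_assoc, ← ENNReal.ofReal_mul (by norm_num),
                ← ENNReal.ofReal_mul (by positivity)]
              congr 2
              rw [pow_succ]
              field_simp
              norm_num
    _ = ENNReal.ofReal (4 * B) * ∫⁻ y, ENNReal.ofReal |g y| * ∑' j : ℕ, w (2 * D) j y := by
        rw [ENNReal.tsum_mul_left, ← lintegral_tsum]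
        · simp only [ENNReal.tsum_mul_left]
        · intro j
          have := hwm (2 * D) j
          fun_prop
    _ ≤ ENNReal.ofReal (4 * B) * ∫⁻ y, ENNReal.ofReal |g y| * ENNReal.ofReal (2 * D + 1) := by
        gcongr with y
        have b2 := gs_log1 (norm_nonneg y)
        refine (gs_count (by positivity) (by linarith)).trans ?_
        apply ENNReal.ofReal_le_ofReal
        rw [div_le_iff₀ (by linarith)]
        nlinarith
    _ < ⊤ := by
        rw [lintegral_mul_const' _ _ (by simp)]
        exact ENNReal.mul_lt_top ENNReal.ofReal_lt_top (ENNReal.mul_lt_top hgG ENNReal.ofReal_lt_top)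

lemma gs_core {n : ℕ} (hn : 1 ≤ n) {g : En n → ℝ} (hgm : Measurable g)
    (hg : Integrable g) (hg0 : ∫ y, g y = 0)
    (hc1 : ∫⁻ y, ENNReal.ofReal (|g y| * (1 + lnp (Real.log (Real.exp 1 + |g y|)))) < ⊤)
    (hc2 : ∫⁻ y, ENNReal.ofReal (|g y| * (1 + lnp (Real.log (Real.exp 1 + ‖y‖)))) < ⊤)
    {φ : En n → ℝ} (hφ : IsTestFun n φ) :
    ∫⁻ x, ENNReal.ofReal (Psi n x (Mphi n φ g x)) < ⊤ := by
  obtain ⟨C, hC1, hCb, hCl⟩ := gs_phi hφ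
  set D : ℝ := 2 * (n + 1) with hD
  obtain ⟨U, hUm, hU, hUint⟩ := gs_high hn hgm hg hC1 hc1
  obtain ⟨W, hWm, hW, hWint⟩ := gs_low hn hgm hg hC1 (D := D) (by positivity)
  obtain ⟨A, hA0, hA⟩ := gs_kernel n
  set Lx : En n → ℝ := fun x => Real.log (Real.exp 1 + ‖x‖) with hLx
  have hLx1 : ∀ x, 1 ≤ Lx x := fun x => gs_log1 (norm_nonneg x)
  set k : En n → En n → ℝ := fun x y => ((1 + ‖x‖) ^ n)⁻¹ * min 1 (‖y‖ / (1 + ‖x‖)) with hk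
  have hk0 : ∀ x y, 0 ≤ k x y := fun x y => by simp only [hk]; positivity
  set b : En n → ℝ≥0∞ := fun x => ∫⁻ y, ENNReal.ofReal |g y| * ENNReal.ofReal (k x y) with hb
  set C' := 2 * C * 20 ^ (n + 1) with hC'
  set T1 : En n → ℝ≥0∞ := fun x => ENNReal.ofReal ((1 + ‖x‖) ^ (-((n:ℝ) + 1))) with hT1
  set T2 : En n → ℝ≥0∞ := fun x => ENNReal.ofReal (4 / Lx x) * (ENNReal.ofReal C' * b x) with hT2
  set T3 : En n → ℝ≥0∞ := fun x => ∑' j : ℕ, (U j).indicator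
    (fun _ => ENNReal.ofReal (2 ^ (j + 1) * 3 / (j + 1))) x with hT3
  set T4 : En n → ℝ≥0∞ := fun x => ∑' j : ℕ, (W j).indicator
    (fun x => ENNReal.ofReal ((1/2) ^ j) *
        ENNReal.ofReal (if (j:ℝ) < D * Lx x then 1 / Lx x else 0)) x with hT4
  have key : ∀ s : ℝ, ∀ x, s < Mphi n φ g x →
      (∃ t, 0 < t ∧ t ≤ (1 + ‖x‖) / 20 ∧ ENNReal.ofReal (s * t ^ n) ≤
        ENNReal.ofReal C * ∫⁻ y in closedBall x t, ENNReal.ofReal |g y|) ∨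
      ENNReal.ofReal s ≤ ENNReal.ofReal C' * b x := by
    intro s x hs
    have : Nonempty {t : ℝ // 0 < t} := ⟨⟨1, one_pos⟩⟩
    obtain ⟨⟨t, ht⟩, hst⟩ := exists_lt_of_lt_ciSup hs
    by_cases h : t ≤ (1 + ‖x‖) / 20
    · exact Or.inl ⟨t, ht, h, gs_small hφ hCb ht x hst⟩
    · right
      exact (ENNReal.ofReal_le_ofReal hst.le).trans
        (gs_large hφ hg hg0 hCb hCl x (le_of_not_ge h))
  have hT2le : ∀ s x, 0 ≤ s → ENNReal.ofReal s ≤ ENNReal.ofReal C' * b x →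
      Mphi n φ g x ≤ 4 * s → 0 < Mphi n φ g x →
      ENNReal.ofReal (Psi n x (Mphi n φ g x)) ≤ T2 x := by
    intro s x hs0 hs hM hM0
    calc ENNReal.ofReal (Psi n x (Mphi n φ g x)) ≤ ENNReal.ofReal ((4 / Lx x) * s) := by
          apply ENNReal.ofReal_le_ofReal
          unfold Psi
          have h1 := hLx1 x
          have h2 := gs_log1 hM0.le
          rw [div_mul_eq_mul_div]
          apply div_le_div₀ (by positivity) hM (by linarith)
          simp only [hLx]; linarith
      _ = ENNReal.ofReal (4 / Lx x) * ENNReal.ofReal s :=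
          ENNReal.ofReal_mul (by have := hLx1 x; positivity)
      _ ≤ _ := by simp only [hT2]; gcongr
  have hpt : ∀ x, ENNReal.ofReal (Psi n x (Mphi n φ g x)) ≤ T1 x + (T2 x + (T3 x + T4 x)) := by
    intro x
    set M := Mphi n φ g x with hM
    have hM0 : 0 ≤ M := Real.iSup_nonneg fun _ => abs_nonneg _
    have i1 : T1 x ≤ T1 x + (T2 x + (T3 x + T4 x)) := le_self_add
    have i2 : T2 x ≤ T1 x + (T2 x + (T3 x + T4 x)) := le_add_left le_self_add
    have i3 : T3 x ≤ T1 x + (T2 x + (T3 x + T4 x)) :=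
      le_add_left (le_add_left le_self_add)
    have i4 : T4 x ≤ T1 x + (T2 x + (T3 x + T4 x)) :=
      le_add_left (le_add_left (le_add_left le_rfl))
    have hl := hLx1 x
    have hlM := gs_log1 hM0
    rcases hM0.eq_or_lt with h0 | hMpos
    · rw [← h0]; simp [Psi]
    rcases le_or_gt 1 M with hM1 | hM1
    · obtain ⟨j, hj1, hj2⟩ := exists_nat_pow_near (x := M) (y := 2) hM1 (by norm_num)
      have hp : (0:ℝ) < 2 ^ j := by positivity
      rcases key (2 ^ j / 2) x (by rw [← hM]; linarith) with ⟨t, ht0, ht1, ht2⟩ | h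
      · refine le_trans ?_ i3
        refine le_trans ?_ (ENNReal.le_tsum j)
        rw [indicator_of_mem (hU j x t ht0 ht1 ht2)]
        apply ENNReal.ofReal_le_ofReal
        unfold Psi
        have he : 0 < Real.exp 1 := Real.exp_pos 1
        have := gs_L_ge (k := j) (r := M) (by linarith) hM0
        calc M / (Real.log (Real.exp 1 + M) + Real.log (Real.exp 1 + ‖x‖))
            ≤ 2 ^ (j + 1) / (((j:ℝ) + 1) / 3) := by
              apply div_le_div₀ (by positivity) hj2.le (by positivity)
              simp only [hLx] at hl
              linarith
          _ = _ := by field_simp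
      · refine le_trans (hT2le _ x (by positivity) h ?_ hMpos) i2
        rw [← hM, pow_succ] at *
        linarith
    · obtain ⟨j, hj1, hj2⟩ := exists_nat_pow_near_of_lt_one (x := M) (y := 1/2) hMpos hM1.le
        (by norm_num) (by norm_num)
      rcases key ((1/2) ^ (j + 1)) x hj1 with ⟨t, ht0, ht1, ht2⟩ | h
      · by_cases hjD : (j:ℝ) < D * Lx x
        · refine le_trans ?_ i4
          refine le_trans ?_ (ENNReal.le_tsum j)
          rw [indicator_of_mem (hW j x t ht0 ht1 ht2), if_pos hjD,
            ← ENNReal.ofReal_mul (by positivity)]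
          apply ENNReal.ofReal_le_ofReal
          unfold Psi
          rw [mul_one_div]
          apply div_le_div₀ (by positivity) hj2 (by linarith)
          simp only [hLx]; linarith
        · refine le_trans ?_ i1
          apply ENNReal.ofReal_le_ofReal
          have hr : 0 < 1 + ‖x‖ := by positivity
          calc Psi n x M ≤ M := by
                unfold Psi
                apply div_le_self hM0
                simp only [hLx] at hl; linarith
            _ ≤ (1/2) ^ j := hj2
            _ ≤ _ := by
                rw [← Real.log_le_log_iff (by positivity) (by positivity), Real.log_pow,
                  Real.log_rpow hr, one_div, Real.log_inv]
                have e1 : Real.log (1 + ‖x‖) ≤ Lx x := by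
                  apply Real.log_le_log hr
                  have : 1 ≤ Real.exp 1 := Real.one_le_exp (by norm_num)
                  linarith
                have e2 := Real.log_two_gt_d9
                have e3 : ((n:ℝ) + 1) * Real.log (1 + ‖x‖) ≤ (n + 1) * Lx x := by gcongr
                have e4 : 2 * (n + 1) * Lx x ≤ (j:ℝ) := not_lt.1 hjD
                have e5 : (0:ℝ) ≤ j := Nat.cast_nonneg j
                nlinarith
      · refine le_trans (hT2le _ x (by positivity) h ?_ hMpos) i2
        have : (0:ℝ) < (1/2) ^ j := by positivity
        rw [← hM]
        rw [pow_succ]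
        linarith
  have hkm : Measurable (Function.uncurry k) := by
    simp only [hk, Function.uncurry_def]
    fun_prop
  have hLm : Measurable Lx := by simp only [hLx]; fun_prop
  have hbm : Measurable b := by
    apply Measurable.lintegral_prod_right' (f := fun p : En n × En n =>
      ENNReal.ofReal |g p.2| * ENNReal.ofReal (k p.1 p.2))
    have : Measurable fun p : En n × En n => k p.1 p.2 := hkm
    fun_prop
  have hT1m : Measurable T1 := by simp only [hT1]; fun_prop
  have hT2m : Measurable T2 := by simp only [hT2]; fun_prop
  have hT3m : Measurable T3 := by
    apply Measurable.tsum
    intro j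
    exact measurable_const.indicator (hUm j)
  refine lt_of_le_of_lt (lintegral_mono hpt) ?_
  rw [lintegral_add_left hT1m, lintegral_add_left hT2m, lintegral_add_left hT3m]
  refine ENNReal.add_lt_top.2 ⟨?_, ENNReal.add_lt_top.2 ⟨?_, ENNReal.add_lt_top.2 ⟨hUint, hWint⟩⟩⟩
  · apply finite_integral_one_add_norm
    rw [finrank_euclideanSpace, Fintype.card_fin]
    linarith
  · calc ∫⁻ x, T2 x = ∫⁻ x, ENNReal.ofReal (4 * C') *
            ∫⁻ y, ENNReal.ofReal |g y| * ENNReal.ofReal (k x y / Lx x) := by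
          congr 1; ext x
          have hl := hLx1 x
          simp only [hT2, hb]
          rw [← lintegral_const_mul' _ _ ENNReal.ofReal_ne_top,
            ← lintegral_const_mul' _ _ ENNReal.ofReal_ne_top,
            ← lintegral_const_mul' _ _ ENNReal.ofReal_ne_top]
          congr 1; ext y
          have := hk0 x y
          have hC0 : 0 ≤ C' := by positivity
          rw [← ENNReal.ofReal_mul (by positivity), ← ENNReal.ofReal_mul (by positivity),
            ← ENNReal.ofReal_mul (by positivity), ← ENNReal.ofReal_mul (by positivity),
            ← ENNReal.ofReal_mul (by positivity)]
          congr 1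
          ring
      _ = ENNReal.ofReal (4 * C') * ∫⁻ y, ∫⁻ x,
            ENNReal.ofReal |g y| * ENNReal.ofReal (k x y / Lx x) := by
          rw [lintegral_const_mul' _ _ ENNReal.ofReal_ne_top, lintegral_lintegral_swap]
          apply Measurable.aemeasurable
          simp only [Function.uncurry_def]
          have : Measurable fun p : En n × En n => k p.1 p.2 := hkm
          fun_prop
      _ ≤ ENNReal.ofReal (4 * C') * ∫⁻ y, ENNReal.ofReal A *
            ENNReal.ofReal (|g y| * (1 + lnp (Real.log (Real.exp 1 + ‖y‖)))) := by
          gcongr with y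
          rw [lintegral_const_mul' _ _ ENNReal.ofReal_ne_top]
          refine (mul_le_mul' le_rfl (hA y)).trans (le_of_eq ?_)
          rw [← ENNReal.ofReal_mul (abs_nonneg _), ← ENNReal.ofReal_mul hA0]
          congr 1; ring
      _ < ⊤ := by
          rw [lintegral_const_mul' _ _ ENNReal.ofReal_ne_top]
          exact ENNReal.mul_lt_top ENNReal.ofReal_lt_top
            (ENNReal.mul_lt_top ENNReal.ofReal_lt_top hc2)

lemma gs_unitQ {n : ℕ} {x : En n} (hx : x ∈ unitQ n) : ‖x‖ ≤ n := by
  rw [EuclideanSpace.norm_eq]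
  apply Real.sqrt_le_iff.2
  refine ⟨by positivity, ?_⟩
  calc ∑ i, ‖x i‖ ^ 2 ≤ ∑ _i : Fin n, (1:ℝ) := by
        apply Finset.sum_le_sum
        intro i _
        have := hx i
        rw [Real.norm_eq_abs, sq_abs]
        nlinarith
    _ = n := by simp
    _ ≤ (n:ℝ) ^ 2 := by
        have : n ≤ n ^ 2 := Nat.le_self_pow (by norm_num) n
        exact_mod_cast this

/-- **Sufficiency in the global Stein theorem for `H_log`.**
If `f` is integrable and `∫ |f| (1 + ln₊ ln(e+|f|) + ln₊ ln(e+|x|)) dx < ∞`, then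
`T_θ f = f - (∫ f) θ` belongs to `H_log(ℝ^n)`. -/
theorem global_stein_Hlog_sufficiency (n : ℕ) (hn : 1 ≤ n) (θ f : En n → ℝ)
    (hθmeas : Measurable θ) (hθbdd : ∃ C, ∀ x, |θ x| ≤ C)
    (hθsupp : ∀ x, x ∉ unitQ n → θ x = 0) (hθint : (∫ x, θ x) = 1)
    (hf : Integrable f)
    (hcond : ∫⁻ x, ENNReal.ofReal (|f x| *
        (1 + lnp (Real.log (Real.exp 1 + |f x|)) +
          lnp (Real.log (Real.exp 1 + ‖x‖)))) < ⊤) :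
    ∀ φ : En n → ℝ, IsTestFun n φ →
      ∫⁻ x, ENNReal.ofReal
        (Psi n x (Mphi n φ (fun y => f y - (∫ z, f z) * θ y) x)) < ⊤ := by
  intro φ hφ
  obtain ⟨Cθ, hCθ⟩ := hθbdd
  have hCθ0 : 0 ≤ Cθ := (abs_nonneg _).trans (hCθ 0)
  have hθQ : ∀ x, (n:ℝ) < ‖x‖ → θ x = 0 := fun x hx =>
    hθsupp x (fun h => absurd (gs_unitQ h) (not_le.2 hx))
  have hθi : Integrable θ := by
    by_contra h
    rw [integral_undef h] at hθint
    norm_num at hθint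
  set I := ∫ z, f z with hI
  set g : En n → ℝ := fun y => f y - I * θ y with hgdef
  have hgi : Integrable g := hf.sub (hθi.const_mul I)
  have hg0 : ∫ y, g y = 0 := by
    simp only [hgdef]
    rw [integral_sub hf (hθi.const_mul I), integral_const_mul, hθint, ← hI]
    ring
  set c := |I| * Cθ with hc
  have hc0 : 0 ≤ c := by positivity
  have hIθ : ∀ y, |I * θ y| ≤ c := fun y => by
    rw [abs_mul]; exact mul_le_mul_of_nonneg_left (hCθ y) (abs_nonneg _)
  have hfin : ∀ {h : En n → ℝ}, Integrable h → ∫⁻ y, ENNReal.ofReal |h y| < ⊤ := by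
    intro h hh
    have := hh.2
    rw [HasFiniteIntegral] at this
    simpa only [Real.enorm_eq_ofReal_abs] using this
  have hgabs : ∀ y, |g y| ≤ |f y| + |I * θ y| := fun y => abs_sub _ _
  have hc1 : ∫⁻ y, ENNReal.ofReal (|g y| * (1 + lnp (Real.log (Real.exp 1 + |g y|)))) < ⊤ := by
    set K1 := 1 + Real.log (1 + Real.log 2) with hK1
    have hK10 : 0 ≤ K1 := by
      have : 0 ≤ Real.log 2 := Real.log_nonneg (by norm_num)
      have := Real.log_nonneg (x := 1 + Real.log 2) (by linarith)
      positivity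
    set K2 := 1 + lnp (Real.log (Real.exp 1 + 2 * c)) with hK2
    have hmono : ∀ a b : ℝ, 0 ≤ a → a ≤ b →
        lnp (Real.log (Real.exp 1 + a)) ≤ lnp (Real.log (Real.exp 1 + b)) := by
      intro a b ha hab
      have h1 := gs_log1 ha
      rw [gs_lnp_log ha, gs_lnp_log (ha.trans hab)]
      apply Real.log_le_log (by linarith)
      apply Real.log_le_log (by positivity)
      linarith
    have hpt : ∀ y, ENNReal.ofReal (|g y| * (1 + lnp (Real.log (Real.exp 1 + |g y|)))) ≤
        ENNReal.ofReal (2 * K1) * ENNReal.ofReal (|f y| *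
        (1 + lnp (Real.log (Real.exp 1 + |f y|)) +
          lnp (Real.log (Real.exp 1 + ‖y‖)))) + ENNReal.ofReal K2 * ENNReal.ofReal |g y| := by
      intro y
      have n1 := gs_lnp_nonneg (Real.log (Real.exp 1 + |f y|))
      have n2 := gs_lnp_nonneg (Real.log (Real.exp 1 + ‖y‖))
      have n3 := gs_lnp_nonneg (Real.log (Real.exp 1 + |g y|))
      have n4 := gs_lnp_nonneg (Real.log (Real.exp 1 + 2 * c))
      rcases le_total c |f y| with h | h
      · refine le_add_right ?_
        rw [← ENNReal.ofReal_mul (by positivity)]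
        apply ENNReal.ofReal_le_ofReal
        have hg2 : |g y| ≤ 2 * |f y| := by linarith [hgabs y, hIθ y]
        have h1 := hmono _ _ (abs_nonneg (g y)) hg2
        have h2 := gs_scale (l := 2) (by norm_num) (abs_nonneg (f y))
        calc |g y| * (1 + lnp (Real.log (Real.exp 1 + |g y|)))
            ≤ (2 * |f y|) * (1 + lnp (Real.log (Real.exp 1 + 2 * |f y|))) := by gcongr
          _ ≤ (2 * |f y|) * (K1 * (1 + lnp (Real.log (Real.exp 1 + |f y|)))) := by gcongr
          _ ≤ (2 * |f y|) * (K1 * (1 + lnp (Real.log (Real.exp 1 + |f y|)) +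
                lnp (Real.log (Real.exp 1 + ‖y‖)))) := by
              refine mul_le_mul_of_nonneg_left ?_ (by positivity)
              refine mul_le_mul_of_nonneg_left ?_ hK10
              linarith
          _ = _ := by ring
      · refine le_add_left ?_
        rw [← ENNReal.ofReal_mul (by positivity), mul_comm]
        apply ENNReal.ofReal_le_ofReal
        have hg2 : |g y| ≤ 2 * c := by linarith [hgabs y, hIθ y]
        have h1 := hmono _ _ (abs_nonneg (g y)) hg2
        rw [hK2]
        gcongr
    refine lt_of_le_of_lt (lintegral_mono hpt) ?_
    have hm : AEMeasurable (fun y => ENNReal.ofReal K2 * ENNReal.ofReal |g y|) := by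
      have := hgi.aemeasurable
      exact ((this.abs).ennreal_ofReal).const_mul _
    rw [lintegral_add_right' _ hm, lintegral_const_mul' _ _ ENNReal.ofReal_ne_top,
      lintegral_const_mul' _ _ ENNReal.ofReal_ne_top]
    exact ENNReal.add_lt_top.2 ⟨ENNReal.mul_lt_top ENNReal.ofReal_lt_top hcond,
      ENNReal.mul_lt_top ENNReal.ofReal_lt_top (hfin hgi)⟩
  have hc2 : ∫⁻ y, ENNReal.ofReal (|g y| * (1 + lnp (Real.log (Real.exp 1 + ‖y‖)))) < ⊤ := by
    set K3 := 1 + lnp (Real.log (Real.exp 1 + n)) with hK3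
    have hK30 : 0 ≤ K3 := by
      have := gs_lnp_nonneg (Real.log (Real.exp 1 + n))
      positivity
    have hpt : ∀ y, ENNReal.ofReal (|g y| * (1 + lnp (Real.log (Real.exp 1 + ‖y‖)))) ≤
        ENNReal.ofReal (|f y| *
        (1 + lnp (Real.log (Real.exp 1 + |f y|)) +
          lnp (Real.log (Real.exp 1 + ‖y‖)))) + ENNReal.ofReal K3 * ENNReal.ofReal |I * θ y| := by
      intro y
      have n1 := gs_lnp_nonneg (Real.log (Real.exp 1 + |f y|))
      have n2 := gs_lnp_nonneg (Real.log (Real.exp 1 + ‖y‖))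
      rw [← ENNReal.ofReal_mul (by positivity), ← ENNReal.ofReal_add (by positivity)
        (by positivity)]
      apply ENNReal.ofReal_le_ofReal
      have h1 : |I * θ y| * (1 + lnp (Real.log (Real.exp 1 + ‖y‖))) ≤ K3 * |I * θ y| := by
        rcases le_or_gt ‖y‖ n with h | h
        · rw [mul_comm, hK3]
          gcongr
          have := gs_log1 (norm_nonneg y)
          rw [gs_lnp_log (norm_nonneg y), gs_lnp_log (by positivity)]
          apply Real.log_le_log (by linarith)
          apply Real.log_le_log (by positivity)
          linarith
        · rw [hθQ y h]; simp
      have h2 : |f y| * (1 + lnp (Real.log (Real.exp 1 + ‖y‖))) ≤ |f y| *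
        (1 + lnp (Real.log (Real.exp 1 + |f y|)) + lnp (Real.log (Real.exp 1 + ‖y‖))) := by
        gcongr; linarith
      calc |g y| * (1 + lnp (Real.log (Real.exp 1 + ‖y‖)))
          ≤ (|f y| + |I * θ y|) * (1 + lnp (Real.log (Real.exp 1 + ‖y‖))) := by
            gcongr; exact hgabs y
        _ ≤ _ := by rw [add_mul]; exact add_le_add h2 h1
    refine lt_of_le_of_lt (lintegral_mono hpt) ?_
    rw [lintegral_add_right _ (by fun_prop), lintegral_const_mul' _ _ ENNReal.ofReal_ne_top]
    exact ENNReal.add_lt_top.2 ⟨hcond,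
      ENNReal.mul_lt_top ENNReal.ofReal_lt_top (hfin (hθi.const_mul I))⟩
  obtain ⟨g', hg'm, hgg'⟩ := hgi.aemeasurable
  have hM : ∀ x, Mphi n φ g x = Mphi n φ g' x := by
    intro x
    unfold Mphi
    congr 1; ext t
    unfold phiConv
    congr 1
    apply integral_congr_ae
    filter_upwards [hgg'] with y hy
    rw [hy]
  simp only [hM]
  apply gs_core hn hg'm (hgi.congr hgg') ?_ ?_ ?_ hφ
  · rw [← integral_congr_ae hgg']; exact hg0
  · refine lt_of_le_of_lt (le_of_eq ?_) hc1
    apply lintegral_congr_ae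
    filter_upwards [hgg'] with y hy
    rw [hy]
  · refine lt_of_le_of_lt (le_of_eq ?_) hc2
    apply lintegral_congr_ae
    filter_upwards [hgg'] with y hy
    rw [hy]
end
end
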